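/- Let A and B be C*-algebras, each admitting an AF presentation that has the Fermion property. Then A and B are isomorphic as Banach spaces, i.e. there is a continuous ℂ-linear bijection A → B with continuous inverse. -/

import Mathlib

/-!
Statement 3 (Theorem 1.3 of the paper).

Two C*-algebras admitting AF presentations with the Fermion property are
isomorphic as Banach spaces.
-/

/-- `S` is an AF presentation of the C*-algebra `A`: an increasing sequence of
finite-dimensional *-subalgebras whose union is dense. -/
def IsAFPresentation (A : Type*) [NonUnitalCStarAlgebra A]
    (S : ℕ → NonUnitalStarSubalgebra ℂ A) : Prop :=
  Monotone S ∧ (∀ k, FiniteDimensional ℂ (S k)) ∧ Dense (⋃ k, (S k : Set A))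

/-- The presentation `S` has the Fermion property: there are indices
`n 0 < n 1 < ⋯` and nonzero minimal central projections `p k` of `S (n k)` such
that for every minimal projection `e` of the corner `p k • S (n k) • p k`,
the projection `p (k+1) * e` is nonzero and is not a minimal projection of
`S (n (k+1))`. -/
def HasFermionProperty (A : Type*) [NonUnitalCStarAlgebra A]
    (S : ℕ → NonUnitalStarSubalgebra ℂ A) : Prop :=
  ∃ (n : ℕ → ℕ) (p : ℕ → A),
    StrictMono n ∧
    (∀ k, p k ∈ S (n k)) ∧
    (∀ k, p k * p k = p k ∧ star (p k) = p k) ∧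
    (∀ k, p k ≠ 0) ∧
    -- `p k` is central in `S (n k)`
    (∀ k, ∀ a ∈ S (n k), p k * a = a * p k) ∧
    -- `p k` is minimal among the central projections of `S (n k)`
    (∀ k, ∀ q ∈ S (n k), (q * q = q ∧ star q = q) → (∀ a ∈ S (n k), q * a = a * q) →
      q * p k = q → q ≠ 0 → q = p k) ∧
    -- every minimal projection `e` of the corner `p k * S (n k) * p k` meets the
    -- next summand with multiplicity at least two
    (∀ k, ∀ e ∈ S (n k), (e * e = e ∧ star e = e) → e ≠ 0 → e * p k = e →
      (∀ a ∈ S (n k), ∃ c : ℂ, e * a * e = c • e) →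
      (p (k + 1) * e ≠ 0 ∧
        ∃ q ∈ S (n (k + 1)), (q * q = q ∧ star q = q) ∧ q ≠ 0 ∧
          q * (p (k + 1) * e) = q ∧ (p (k + 1) * e) * q = q ∧ q ≠ p (k + 1) * e))

namespace FermionAF

section Basics

variable {A : Type*} [NonUnitalCStarAlgebra A]

lemma norm_le_of_orth {x y : A} (h : star x * y = 0) : ‖x‖ ≤ ‖x + y‖ := by
  have h1 : star x * (x + y) = star x * x := by rw [mul_add, h, add_zero]
  have h2 : ‖x‖ * ‖x‖ ≤ ‖x‖ * ‖x + y‖ := by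
    calc ‖x‖ * ‖x‖ = ‖star x * x‖ := (CStarRing.norm_star_mul_self).symm
      _ = ‖star x * (x + y)‖ := by rw [h1]
      _ ≤ ‖star x‖ * ‖x + y‖ := norm_mul_le _ _
      _ = ‖x‖ * ‖x + y‖ := by rw [norm_star]
  by_cases hx : ‖x‖ = 0
  · rw [hx]; exact norm_nonneg _
  · exact le_of_mul_le_mul_left h2 (lt_of_le_of_ne (norm_nonneg _) (Ne.symm hx))

lemma sa_norm_sq {a : A} (ha : star a = a) : ‖a * a‖ = ‖a‖ * ‖a‖ := by
  conv_lhs => rw [← ha]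
  conv_lhs => rw [show star a * star a = star a * a by rw [ha]]
  exact CStarRing.norm_star_mul_self

lemma sa_orth_aux (n : ℕ) : ∀ (a b : A) (M : ℝ), star a = a → star b = b → a * b = 0 → b * a = 0 →
    ‖a‖ ≤ M → ‖b‖ ≤ M → ‖a + b‖ ^ (2 ^ n) ≤ 2 * M ^ (2 ^ n) := by
  induction n with
  | zero =>
    intro a b M _ _ _ _ h1 h2
    have := norm_add_le a b
    simp; linarith
  | succ n ih =>
    intro a b M ha hb hab hba h1 h2
    have hM : 0 ≤ M := (norm_nonneg _).trans h1
    have e1 : (a + b) * (a + b) = a * a + b * b := by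
      rw [add_mul, mul_add, mul_add, hab, hba]; simp
    have e2 : ‖a * a + b * b‖ = ‖a + b‖ ^ 2 := by
      rw [← e1, sa_norm_sq (by rw [star_add, ha, hb]), sq]
    have := ih (a * a) (b * b) (M ^ 2) (by rw [star_mul, ha]) (by rw [star_mul, hb])
      (by rw [mul_assoc, ← mul_assoc a b b, hab]; simp)
      (by rw [mul_assoc, ← mul_assoc b a a, hba]; simp)
      (by rw [sa_norm_sq ha, sq]; gcongr) (by rw [sa_norm_sq hb, sq]; gcongr)
    rw [e2, ← pow_mul, ← pow_mul] at this
    rw [pow_succ, mul_comm]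
    exact this

lemma sa_orth {a b : A} {M : ℝ} (ha : star a = a) (hb : star b = b) (hab : a * b = 0)
    (hba : b * a = 0) (h1 : ‖a‖ ≤ M) (h2 : ‖b‖ ≤ M) : ‖a + b‖ ≤ M := by
  have hM : 0 ≤ M := (norm_nonneg _).trans h1
  by_contra hlt
  push Not at hlt
  rcases hM.eq_or_lt with h0 | hpos
  · subst h0
    have e1 : a = 0 := norm_le_zero_iff.mp h1
    have e2 : b = 0 := norm_le_zero_iff.mp h2
    subst e1; subst e2; simp at hlt
  · have hr : 1 < ‖a + b‖ / M := by rwa [one_lt_div hpos]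
    obtain ⟨n, hn⟩ := pow_unbounded_of_one_lt 2 hr
    have hn2 : n ≤ 2 ^ n := Nat.lt_two_pow_self.le
    have h3 := sa_orth_aux n a b M ha hb hab hba h1 h2
    have h4 : (‖a + b‖ / M) ^ n ≤ (‖a + b‖ / M) ^ (2 ^ n) := pow_le_pow_right₀ hr.le hn2
    rw [div_pow _ _ (2 ^ n), le_div_iff₀ (by positivity)] at h4
    have : 2 * M ^ 2 ^ n < (‖a + b‖ / M) ^ n * M ^ 2 ^ n := by gcongr
    linarith

lemma orth_norm_add {x y : A} {M : ℝ} (h1 : star x * y = 0) (h2 : x * star y = 0)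
    (hx : ‖x‖ ≤ M) (hy : ‖y‖ ≤ M) : ‖x + y‖ ≤ M := by
  have hM : 0 ≤ M := (norm_nonneg _).trans hx
  have h1' : star y * x = 0 := by
    have := congrArg star h1
    simpa using this
  have h2' : y * star x = 0 := by
    have := congrArg star h2
    simpa using this
  have e : star (x + y) * (x + y) = star x * x + star y * y := by
    rw [star_add, add_mul, mul_add, mul_add, h1, h1']; simp
  have h3 : ‖star (x + y) * (x + y)‖ ≤ M * M := by
    rw [e]
    apply sa_orth
    · simp
    · simp
    · rw [mul_assoc, ← mul_assoc x, h2]; simp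
    · rw [mul_assoc, ← mul_assoc y, h2']; simp
    · rw [CStarRing.norm_star_mul_self]; gcongr
    · rw [CStarRing.norm_star_mul_self]; gcongr
  rw [CStarRing.norm_star_mul_self] at h3
  exact abs_le_of_sq_le_sq' (by nlinarith) hM |>.2

lemma orth_norm_sum {ι : Type*} (s : Finset ι) (x : ι → A) {M : ℝ} (hM : 0 ≤ M)
    (h1 : ∀ i ∈ s, ∀ j ∈ s, i ≠ j → star (x i) * x j = 0)
    (h2 : ∀ i ∈ s, ∀ j ∈ s, i ≠ j → x i * star (x j) = 0)
    (hx : ∀ i ∈ s, ‖x i‖ ≤ M) : ‖∑ i ∈ s, x i‖ ≤ M := by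
  classical
  induction s using Finset.induction_on with
  | empty => simpa using hM
  | insert a s ha ih =>
    rw [Finset.sum_insert ha]
    apply orth_norm_add
    · rw [Finset.mul_sum]
      refine Finset.sum_eq_zero fun j hj => h1 a (by simp) j (by simp [hj]) ?_
      rintro rfl; exact ha hj
    · rw [star_sum, Finset.mul_sum]
      refine Finset.sum_eq_zero fun j hj => h2 a (by simp) j (by simp [hj]) ?_
      rintro rfl; exact ha hj
    · exact hx a (by simp)
    · refine ih (fun i hi j hj => h1 i (by simp [hi]) j (by simp [hj]))
        (fun i hi j hj => h2 i (by simp [hi]) j (by simp [hj])) (fun i hi => hx i (by simp [hi]))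

/-- Projections. -/
def IsPr (e : A) : Prop := e * e = e ∧ star e = e

lemma IsPr.norm_le {e : A} (he : IsPr e) : ‖e‖ ≤ 1 := by
  have := sa_norm_sq he.2
  rw [he.1] at this
  by_contra h
  push Not at h
  nlinarith

lemma fd_closed (C : NonUnitalStarSubalgebra ℂ A) [hC : FiniteDimensional ℂ C] :
    IsClosed (C : Set A) := by
  have : FiniteDimensional ℂ (C.toSubmodule : Submodule ℂ A) := hC
  exact Submodule.closed_of_finiteDimensional (C.toSubmodule : Submodule ℂ A)

/-- Finite-dimensional *-subalgebras have a unit. -/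
lemma exists_unit (C : NonUnitalStarSubalgebra ℂ A) [FiniteDimensional ℂ C] :
    ∃ u ∈ C, IsPr u ∧ ∀ c ∈ C, u * c = c ∧ c * u = c := by
  have : IsClosed (C : Set A) := fd_closed C
  let _ : PartialOrder C := CStarAlgebra.spectralOrder C
  have : StarOrderedRing C := CStarAlgebra.spectralOrderedRing C
  have : ProperSpace C := FiniteDimensional.proper ℂ C
  have hl := CStarAlgebra.increasingApproximateUnit C
  obtain ⟨u, -, hu⟩ := (isCompact_closedBall (0 : C) 1) (f := CStarAlgebra.approximateUnit C)
    (by rw [Filter.le_principal_iff]; exact hl.closedBall_mem)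
  have key : ∀ m : C, u * m = m := by
    intro m
    have h1 : Filter.Tendsto (fun x => x * m) (CStarAlgebra.approximateUnit C) (nhds m) :=
      hl.tendsto_mul_right m
    have h2 : MapClusterPt (u * m) (CStarAlgebra.approximateUnit C) (fun x => x * m) := by
      have : Continuous fun x : C => x * m := by fun_prop
      exact MapClusterPt.continuousAt_comp (f := fun x : C => x * m) (u := id)
        this.continuousAt (by simpa [MapClusterPt] using hu)
    have h3 : ClusterPt (u * m) (nhds m) := ClusterPt.mono h2 h1
    exact eq_of_nhds_neBot h3
  have hs : star u = u := by
    have := key (star u)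
    have h2 := congrArg star this
    rw [star_mul, star_star, this] at h2
    exact h2
  have key2 : ∀ m : C, m * u = m := by
    intro m
    have := congrArg star (key (star m))
    simpa [hs] using this
  refine ⟨u, u.2, ⟨congrArg Subtype.val (key u), congrArg Subtype.val hs⟩, fun c hc => ?_⟩
  exact ⟨congrArg Subtype.val (key ⟨c, hc⟩), congrArg Subtype.val (key2 ⟨c, hc⟩)⟩

end Basics

end FermionAF

namespace FermionAF

section Minimal

variable {A : Type*} [NonUnitalCStarAlgebra A]

/-- Elements of `C` in the corner of `e` that are annihilated by `g`. -/
def cornerAnn (C : NonUnitalStarSubalgebra ℂ A) (e g : A) (he : star e = e) (hg : star g = g) :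
    NonUnitalStarSubalgebra ℂ A where
  carrier := {x | x ∈ C ∧ e * x = x ∧ x * e = x ∧ g * x = 0 ∧ x * g = 0}
  add_mem' := by
    rintro x y ⟨h1, h2, h3, h4, h5⟩ ⟨k1, k2, k3, k4, k5⟩
    exact ⟨add_mem h1 k1, by rw [mul_add, h2, k2], by rw [add_mul, h3, k3],
      by rw [mul_add, h4, k4, add_zero], by rw [add_mul, h5, k5, add_zero]⟩
  zero_mem' := ⟨zero_mem _, by simp, by simp, by simp, by simp⟩
  mul_mem' := by
    rintro x y ⟨h1, h2, h3, h4, h5⟩ ⟨k1, k2, k3, k4, k5⟩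
    exact ⟨mul_mem h1 k1, by rw [← mul_assoc, h2], by rw [mul_assoc, k3],
      by rw [← mul_assoc, h4, zero_mul], by rw [mul_assoc, k5, mul_zero]⟩
  smul_mem' := by
    rintro c x ⟨h1, h2, h3, h4, h5⟩
    exact ⟨SMulMemClass.smul_mem c h1, by rw [mul_smul_comm, h2], by rw [smul_mul_assoc, h3],
      by rw [mul_smul_comm, h4, smul_zero], by rw [smul_mul_assoc, h5, smul_zero]⟩
  star_mem' := by
    rintro x ⟨h1, h2, h3, h4, h5⟩
    refine ⟨star_mem h1, ?_, ?_, ?_, ?_⟩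
    · have := congrArg star h3; rwa [star_mul, he] at this
    · have := congrArg star h2; rwa [star_mul, he] at this
    · have := congrArg star h5; rwa [star_mul, hg, star_zero] at this
    · have := congrArg star h4; rwa [star_mul, hg, star_zero] at this

lemma mem_cornerAnn {C : NonUnitalStarSubalgebra ℂ A} {e g : A} {he : star e = e}
    {hg : star g = g} {x : A} : x ∈ cornerAnn C e g he hg ↔
      x ∈ C ∧ e * x = x ∧ x * e = x ∧ g * x = 0 ∧ x * g = 0 := Iff.rfl

lemma fd_of_le {C K : NonUnitalStarSubalgebra ℂ A} [hC : FiniteDimensional ℂ C] (h : K ≤ C) :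
    FiniteDimensional ℂ K := by
  have : FiniteDimensional ℂ (C.toSubmodule : Submodule ℂ A) := hC
  exact Submodule.finiteDimensional_of_le (S₁ := (K.toSubmodule : Submodule ℂ A))
    (S₂ := (C.toSubmodule : Submodule ℂ A)) h

instance (C : NonUnitalStarSubalgebra ℂ A) [FiniteDimensional ℂ C] (e g : A) (he : star e = e)
    (hg : star g = g) : FiniteDimensional ℂ (cornerAnn C e g he hg) :=
  fd_of_le (C := C) (fun _ hx => hx.1)

/-- Minimal projections of `C`. -/
def IsMinPr (C : NonUnitalStarSubalgebra ℂ A) (e : A) : Prop :=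
  e ∈ C ∧ IsPr e ∧ e ≠ 0 ∧ ∀ a ∈ C, ∃ c : ℂ, e * a * e = c • e

lemma sa_scalar (C : NonUnitalStarSubalgebra ℂ A) [FiniteDimensional ℂ C] {e : A} (heC : e ∈ C)
    (he : IsPr e) (he0 : e ≠ 0)
    (hno : ∀ u ∈ C, IsPr u → e * u = u → u * e = u → u ≠ 0 → u = e)
    {h : A} (hC : h ∈ C) (hs : star h = h) (h1 : e * h = h) (h2 : h * e = h) :
    ∃ c : ℂ, h = c • e := by
  set K := cornerAnn C e 0 he.2 (star_zero _) with hK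
  have heK : e ∈ K := ⟨heC, he.1, he.1, by simp, by simp⟩
  have hhK : h ∈ K := ⟨hC, h1, h2, by simp, by simp⟩
  have : Nontrivial K := ⟨⟨e, heK⟩, 0, fun hh => he0 (congrArg Subtype.val hh)⟩
  obtain ⟨l, hl⟩ := Module.End.exists_eigenvalue (LinearMap.mulLeft ℂ (⟨h, hhK⟩ : K))
  obtain ⟨y, hy⟩ := hl.exists_hasEigenvector
  have hy1 : h * (y : A) = l • (y : A) := by
    have := hy.apply_eq_smul
    exact congrArg Subtype.val this
  have hy0 : (y : A) ≠ 0 := fun hh => hy.2 (Subtype.ext hh)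
  have hyy : star (y : A) * y ≠ 0 := by
    intro hh
    exact hy0 ((CStarRing.star_mul_self_eq_zero_iff _).mp hh)
  have hyy' : (y : A) * star (y : A) ≠ 0 := by
    intro hh
    exact hy0 ((CStarRing.mul_star_self_eq_zero_iff _).mp hh)
  have hlr : star l = l := by
    have e1 : star (y : A) * (h * y) = l • (star (y : A) * y) := by rw [hy1, mul_smul_comm]
    have e2 := congrArg star e1
    rw [star_mul, star_mul, star_star, hs, star_smul, star_mul, star_star, mul_assoc, e1] at e2
    have e3 : (l - star l) • (star (y : A) * (y : A)) = 0 := by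
      rw [sub_smul, ← e2, sub_self]
    rcases smul_eq_zero.mp e3 with h | h
    · exact (sub_eq_zero.mp h).symm
    · exact absurd h hyy
  set g := h - l • e with hg
  have hgs : star g = g := by rw [hg, star_sub, hs, star_smul, he.2, hlr]
  have hyK := y.2
  have hgy : g * (y : A) = 0 := by
    rw [hg, sub_mul, hy1, smul_mul_assoc, hyK.2.1, sub_self]
  have hsy : star (y : A) * e = star (y : A) := by
    have := congrArg star hyK.2.1; rwa [star_mul, he.2] at this
  have hN : (y : A) * star (y : A) ∈ cornerAnn C e g he.2 hgs := by
    refine ⟨mul_mem hyK.1 (star_mem hyK.1), by rw [← mul_assoc, hyK.2.1], by rw [mul_assoc, hsy],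
      by rw [← mul_assoc, hgy, zero_mul], ?_⟩
    have := congrArg star hgy
    rw [star_mul, hgs, star_zero] at this
    rw [mul_assoc, this, mul_zero]
  obtain ⟨u, huN, hu, hu2⟩ := exists_unit (cornerAnn C e g he.2 hgs)
  have hu0 : u ≠ 0 := by
    rintro rfl
    have := (hu2 _ hN).1
    rw [zero_mul] at this
    exact hyy' this.symm
  have := hno u huN.1 hu huN.2.1 huN.2.2.1 hu0
  subst this
  refine ⟨l, ?_⟩
  have h5 : g * u = 0 := huN.2.2.2.1
  rw [hg, sub_mul, h2, smul_mul_assoc, he.1] at h5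
  exact sub_eq_zero.mp h5

lemma isMin_of_no (C : NonUnitalStarSubalgebra ℂ A) [FiniteDimensional ℂ C] {e : A} (heC : e ∈ C)
    (he : IsPr e) (he0 : e ≠ 0)
    (hno : ∀ u ∈ C, IsPr u → e * u = u → u * e = u → u ≠ 0 → u = e) : IsMinPr C e := by
  refine ⟨heC, he, he0, fun a ha => ?_⟩
  set x := e * a * e with hx
  have hxC : x ∈ C := mul_mem (mul_mem heC ha) heC
  have x1 : e * x = x := by rw [hx, ← mul_assoc, ← mul_assoc, he.1]
  have x2 : x * e = x := by rw [hx, mul_assoc, he.1]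
  have x1' : star x * e = star x := by
    have := congrArg star x1; rwa [star_mul, he.2] at this
  have x2' : e * star x = star x := by
    have := congrArg star x2; rwa [star_mul, he.2] at this
  obtain ⟨c, hc⟩ := sa_scalar C heC he he0 hno (h := x + star x) (add_mem hxC (star_mem hxC))
    (by rw [star_add, star_star, add_comm]) (by rw [mul_add, x1, x2']) (by rw [add_mul, x2, x1'])
  obtain ⟨d, hd⟩ := sa_scalar C heC he he0 hno (h := Complex.I • (x - star x))
    (SMulMemClass.smul_mem _ (sub_mem hxC (star_mem hxC)))
    (by rw [star_smul, star_sub, star_star, show star Complex.I = - Complex.I from Complex.conj_I,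
      neg_smul, ← smul_neg, neg_sub])
    (by rw [mul_smul_comm, mul_sub, x1, x2']) (by rw [smul_mul_assoc, sub_mul, x2, x1'])
  refine ⟨(c - Complex.I * d) / 2, ?_⟩
  have e1 : x - star x = (-Complex.I * d) • e := by
    have := congrArg (fun z => (-Complex.I) • z) hd
    simpa [smul_smul] using this
  have e2 : (2 : ℂ) • x = (c - Complex.I * d) • e := by
    calc (2 : ℂ) • x = (x + star x) + (x - star x) := by rw [two_smul]; abel
      _ = _ := by rw [hc, e1, ← add_smul]; congr 1; ring
  calc x = (2 : ℂ)⁻¹ • ((2 : ℂ) • x) := by rw [smul_smul]; norm_num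
    _ = _ := by rw [e2, smul_smul]; congr 1; ring

/-- dimension of a corner -/
noncomputable def cdim (C : NonUnitalStarSubalgebra ℂ A) {e : A} (he : IsPr e) : ℕ :=
  Module.finrank ℂ ((cornerAnn C e 0 he.2 (star_zero _)).toSubmodule : Submodule ℂ A)

lemma cdim_lt (C : NonUnitalStarSubalgebra ℂ A) [FiniteDimensional ℂ C] {e f : A} (heC : e ∈ C)
    (he : IsPr e) (hf : IsPr f) (h1 : e * f = f) (h2 : f * e = f) (hne : f ≠ e) :
    cdim C hf < cdim C he := by
  have : FiniteDimensional ℂ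
      ((cornerAnn C e 0 he.2 (star_zero _)).toSubmodule : Submodule ℂ A) :=
    (inferInstance : FiniteDimensional ℂ (cornerAnn C e 0 he.2 (star_zero _)))
  apply Submodule.finrank_lt_finrank_of_lt
  refine lt_of_le_of_ne ?_ ?_
  · rintro x ⟨x1, x2, x3, x4, x5⟩
    refine ⟨x1, ?_, ?_, x4, x5⟩
    · rw [← x2, ← mul_assoc, h1]
    · rw [← x3, mul_assoc, h2]
  · intro hh
    have hmem : e ∈ ((cornerAnn C e 0 he.2 (star_zero _)).toSubmodule : Submodule ℂ A) :=
      ⟨heC, he.1, he.1, by simp, by simp⟩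
    rw [← hh] at hmem
    have h3 : f * e = e := hmem.2.1
    exact hne (h2.symm.trans h3)

lemma exists_min_aux (C : NonUnitalStarSubalgebra ℂ A) [FiniteDimensional ℂ C] (n : ℕ) :
    ∀ (e : A) (he : IsPr e), e ∈ C → e ≠ 0 → cdim C he ≤ n →
    ∃ f, IsMinPr C f ∧ e * f = f ∧ f * e = f := by
  induction n with
  | zero =>
    intro e he heC he0 hn
    by_cases hm : ∀ u ∈ C, IsPr u → e * u = u → u * e = u → u ≠ 0 → u = e
    · exact ⟨e, isMin_of_no C heC he he0 hm, he.1, he.1⟩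
    · push Not at hm
      obtain ⟨u, huC, hu, h1, h2, h0, hne⟩ := hm
      have := cdim_lt C heC he hu h1 h2 hne
      omega
  | succ n ih =>
    intro e he heC he0 hn
    by_cases hm : ∀ u ∈ C, IsPr u → e * u = u → u * e = u → u ≠ 0 → u = e
    · exact ⟨e, isMin_of_no C heC he he0 hm, he.1, he.1⟩
    · push Not at hm
      obtain ⟨u, huC, hu, h1, h2, h0, hne⟩ := hm
      have := cdim_lt C heC he hu h1 h2 hne
      obtain ⟨f, hf, f1, f2⟩ := ih u hu huC h0 (by omega)
      exact ⟨f, hf, by rw [← f1, ← mul_assoc, h1], by rw [← f2, mul_assoc, h2]⟩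

lemma exists_min (C : NonUnitalStarSubalgebra ℂ A) [FiniteDimensional ℂ C] {e : A} (heC : e ∈ C)
    (he : IsPr e) (he0 : e ≠ 0) : ∃ f, IsMinPr C f ∧ e * f = f ∧ f * e = f :=
  exists_min_aux C _ e he heC he0 le_rfl

lemma IsPr.sub {e f : A} (he : IsPr e) (hf : IsPr f) (h1 : e * f = f) (h2 : f * e = f) :
    IsPr (e - f) :=
  ⟨by rw [mul_sub, sub_mul, sub_mul, he.1, h1, h2, hf.1]; simp, by rw [star_sub, he.2, hf.2]⟩

lemma exists_decomp_aux (C : NonUnitalStarSubalgebra ℂ A) [FiniteDimensional ℂ C] (n : ℕ) :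
    ∀ (e : A) (he : IsPr e), e ∈ C → cdim C he ≤ n →
    ∃ (k : ℕ) (f : Fin k → A), (∀ i, IsMinPr C (f i)) ∧ (∀ i j, i ≠ j → f i * f j = 0) ∧
      ∑ i, f i = e ∧ (∀ i, e * f i = f i ∧ f i * e = f i) := by
  induction n using Nat.strong_induction_on with
  | _ n ih =>
    intro e he heC hn
    by_cases he0 : e = 0
    · exact ⟨0, Fin.elim0, fun i => i.elim0, fun i => i.elim0, by simp [he0], fun i => i.elim0⟩
    obtain ⟨f, hf, f1, f2⟩ := exists_min C heC he he0
    have hef := he.sub hf.2.1 f1 f2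
    have h1 : e * (e - f) = e - f := by rw [mul_sub, he.1, f1]
    have h2 : (e - f) * e = e - f := by rw [sub_mul, he.1, f2]
    have hlt := cdim_lt C heC he hef h1 h2 (fun hh => hf.2.2.1 (by simpa using hh))
    obtain ⟨k, g, g1, g2, g3, g4⟩ := ih _ (lt_of_lt_of_le hlt hn) (e - f) hef
      (sub_mem heC hf.1) le_rfl
    have hfe : f * (e - f) = 0 := by rw [mul_sub, f2, hf.2.1.1, sub_self]
    have hef' : (e - f) * f = 0 := by rw [sub_mul, f1, hf.2.1.1, sub_self]
    have k1 : ∀ i, f * g i = 0 := fun i => by rw [← (g4 i).1, ← mul_assoc, hfe, zero_mul]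
    have k2 : ∀ i, g i * f = 0 := fun i => by rw [← (g4 i).2, mul_assoc, hef', mul_zero]
    refine ⟨k + 1, Fin.cons f g, ?_, ?_, ?_, ?_⟩
    · intro i
      refine Fin.cases ?_ (fun i => ?_) i
      · simpa using hf
      · simpa using g1 i
    · intro i j
      refine Fin.cases ?_ (fun i => ?_) i <;> refine Fin.cases ?_ (fun j => ?_) j
      · intro h; exact absurd rfl h
      · intro _; simpa using k1 j
      · intro _; simpa using k2 i
      · intro h; simpa using g2 i j (fun hh => h (by rw [hh]))
    · rw [Fin.sum_univ_succ]; simp [g3]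
    · intro i
      refine Fin.cases ?_ (fun i => ?_) i
      · simpa using ⟨f1, f2⟩
      · simp only [Fin.cons_succ]
        refine ⟨?_, ?_⟩
        · rw [← (g4 i).1, ← mul_assoc, h1]
        · rw [← (g4 i).2, mul_assoc, h2]

lemma exists_decomp (C : NonUnitalStarSubalgebra ℂ A) [FiniteDimensional ℂ C] {e : A}
    (he : IsPr e) (heC : e ∈ C) :
    ∃ (k : ℕ) (f : Fin k → A), (∀ i, IsMinPr C (f i)) ∧ (∀ i j, i ≠ j → f i * f j = 0) ∧
      ∑ i, f i = e ∧ (∀ i, e * f i = f i ∧ f i * e = f i) :=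
  exists_decomp_aux C _ e he heC le_rfl

/-- Two linked minimal projections are equivalent. -/
lemma exists_pi {C : NonUnitalStarSubalgebra ℂ A} {f g x : A} (hf : IsMinPr C f)
    (hg : IsMinPr C g) (hx : x ∈ C) (h0 : f * x * g ≠ 0) :
    ∃ v ∈ C, v * star v = f ∧ star v * v = g ∧ f * v = v ∧ v * g = v := by
  set y := f * x * g with hy
  have hyC : y ∈ C := mul_mem (mul_mem hf.1 hx) hg.1
  have fy : f * y = y := by rw [hy, ← mul_assoc, ← mul_assoc, hf.2.1.1]
  have yg : y * g = y := by rw [hy, mul_assoc, hg.2.1.1]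
  have gy : g * star y = star y := by
    have := congrArg star yg; rwa [star_mul, hg.2.1.2] at this
  have yf : star y * f = star y := by
    have := congrArg star fy; rwa [star_mul, hf.2.1.2] at this
  obtain ⟨c, hc⟩ := hg.2.2.2 (star y * y) (mul_mem (star_mem hyC) hyC)
  have hc' : star y * y = c • g := by
    rw [← mul_assoc g, gy, mul_assoc (star y), yg] at hc; exact hc
  obtain ⟨d, hd⟩ := hf.2.2.2 (y * star y) (mul_mem hyC (star_mem hyC))
  have hd' : y * star y = d • f := by
    rw [← mul_assoc f, fy, mul_assoc y, yf] at hd; exact hd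
  have hcd : d = c := by
    have e1 : y * star y * y = d • y := by rw [hd', smul_mul_assoc, fy]
    have e2 : y * star y * y = c • y := by rw [mul_assoc, hc', mul_smul_comm, yg]
    exact smul_left_injective ℂ h0 (e1.symm.trans e2)
  have hyy : star y * y ≠ 0 := fun hh => h0 ((CStarRing.star_mul_self_eq_zero_iff _).mp hh)
  have hc0 : c ≠ 0 := by rintro rfl; rw [zero_smul] at hc'; exact hyy hc'
  have hcs : star c = c := by
    have := congrArg star hc'
    rw [star_mul, star_star, hc', star_smul, hg.2.1.2] at this
    exact (smul_left_injective ℂ hg.2.2.1 this).symm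
  obtain ⟨r, hr⟩ : ∃ r : ℝ, c = r := ⟨c.re, (Complex.conj_eq_iff_re.mp hcs).symm⟩
  have hrpos : 0 < r := by
    let _ : PartialOrder A := CStarAlgebra.spectralOrder A
    have : StarOrderedRing A := CStarAlgebra.spectralOrderedRing A
    by_contra hneg
    push Not at hneg
    have h1 : (0 : A) ≤ star y * y := star_mul_self_nonneg y
    set z := ((Real.sqrt (-r) : ℝ) : ℂ) • g with hz
    have h2 : (0 : A) ≤ star z * z := star_mul_self_nonneg z
    have h3 : star z * z = -(star y * y) := by
      rw [hc', hz, star_smul, hg.2.1.2, smul_mul_smul_comm, hg.2.1.1, ← neg_smul, hr]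
      congr 1
      rw [show star ((Real.sqrt (-r) : ℝ) : ℂ) = ((Real.sqrt (-r) : ℝ) : ℂ) from
        Complex.conj_ofReal _, ← Complex.ofReal_mul, Real.mul_self_sqrt (by linarith)]
      simp
    rw [h3] at h2
    exact hyy (le_antisymm (neg_nonneg.mp h2) h1)
  set s : ℂ := (((Real.sqrt r)⁻¹ : ℝ) : ℂ) with hs
  have hss : star s * s * c = 1 := by
    rw [hs, hr, show star (((Real.sqrt r)⁻¹ : ℝ) : ℂ) = (((Real.sqrt r)⁻¹ : ℝ) : ℂ) from
        Complex.conj_ofReal _, ← Complex.ofReal_mul, ← Complex.ofReal_mul, ← mul_inv,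
        Real.mul_self_sqrt hrpos.le, inv_mul_cancel₀ hrpos.ne']
    simp
  refine ⟨s • y, SMulMemClass.smul_mem _ hyC, ?_, ?_, by rw [mul_smul_comm, fy],
    by rw [smul_mul_assoc, yg]⟩
  · rw [star_smul, smul_mul_smul_comm, hd', smul_smul, hcd, mul_comm s, hss, one_smul]
  · rw [star_smul, smul_mul_smul_comm, hc', smul_smul, hss, one_smul]

end Minimal

end FermionAF

namespace FermionAF

set_option linter.unusedVariables false

section MatrixUnits

variable {A B : Type*} [NonUnitalCStarAlgebra A] [NonUnitalCStarAlgebra B]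
variable {J S : Type*}

/-- Block matrix units. -/
structure IsMU (s : J → S) (e : J → J → A) : Prop where
  ne : ∀ α, e α α ≠ 0
  zero : ∀ α β, s α ≠ s β → e α β = 0
  mul : ∀ α β γ, s α = s β → e α β * e β γ = e α γ
  orth : ∀ α β γ δ, β ≠ γ → e α β * e γ δ = 0
  star : ∀ α β, star (e α β) = e β α

namespace IsMU

variable {s : J → S} {e : J → J → A}

lemma left (h : IsMU s e) (α β : J) : e α α * e α β = e α β := h.mul _ _ _ rfl

lemma right (h : IsMU s e) (α β : J) : e α β * e β β = e α β := by
  by_cases hs : s α = s β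
  · exact h.mul _ _ _ hs
  · rw [h.zero _ _ hs, zero_mul]

lemma pr (h : IsMU s e) (α : J) : IsPr (e α α) := ⟨h.left _ _, h.star _ _⟩

lemma mul' (h : IsMU s e) (α β γ : J) (hs : s β = s γ) : e α β * e β γ = e α γ := by
  by_cases hs' : s α = s β
  · exact h.mul _ _ _ hs'
  · rw [h.zero _ _ hs', zero_mul, h.zero _ _ (by rwa [← hs])]

lemma ne' (h : IsMU s e) (α β : J) (hs : s α = s β) : e α β ≠ 0 := by
  intro h0
  have := h.mul α β α hs
  rw [h0, zero_mul] at this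
  exact h.ne α this.symm

lemma comp {K : Type*} (h : IsMU s e) (f : K → J) (hf : Function.Injective f) :
    IsMU (fun x => s (f x)) (fun x y => e (f x) (f y)) where
  ne x := h.ne _
  zero x y hs := h.zero _ _ hs
  mul x y z hs := h.mul _ _ _ hs
  orth x y z w hne := h.orth _ _ _ _ (fun hh => hne (hf hh))
  star x y := h.star _ _

/-- cut down to a finer block structure -/
lemma cut {S' : Type*} [DecidableEq S'] (h : IsMU s e) (s' : J → S')
    (hs : ∀ α β, s' α = s' β → s α = s β) :
    IsMU s' (fun α β => if s' α = s' β then e α β else 0) where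
  ne x := by simpa using h.ne x
  zero x y hh := by simp [hh]
  mul x y z hh := by
    simp only [hh, if_true]
    split_ifs with h1
    · exact h.mul _ _ _ (hs _ _ hh)
    · simp
  orth x y z w hne := by
    split_ifs <;> simp [h.orth _ _ _ _ hne]
  star x y := by
    by_cases h1 : s' x = s' y
    · simp [h1, h.star]
    · simp [h1, Ne.symm h1]

end IsMU

/-- span of the matrix units -/
def mspan (e : J → J → A) : Submodule ℂ A := Submodule.span ℂ (Set.range fun p : J × J => e p.1 p.2)

lemma mem_mspan (e : J → J → A) (α β : J) : e α β ∈ mspan e :=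
  Submodule.subset_span ⟨(α, β), rfl⟩

lemma mspan_induct {e : J → J → A} {P : A → Prop} {x : A} (hx : x ∈ mspan e)
    (h1 : ∀ α β, P (e α β)) (h0 : P 0) (ha : ∀ x y, P x → P y → P (x + y))
    (hs : ∀ (c : ℂ) x, P x → P (c • x)) : P x := by
  induction hx using Submodule.span_induction with
  | mem x hx => obtain ⟨p, rfl⟩ := hx; exact h1 _ _
  | zero => exact h0
  | add x y _ _ hx hy => exact ha _ _ hx hy
  | smul c x _ hx => exact hs _ _ hx

lemma mspan_mul {s : J → S} {e : J → J → A} (h : IsMU s e) (α β γ δ : J) :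
    e α β * e γ δ ∈ mspan e := by
  by_cases h1 : β = γ
  · subst h1
    by_cases hs : s α = s β
    · rw [h.mul _ _ _ hs]; exact mem_mspan _ _ _
    · rw [h.zero _ _ hs, zero_mul]; exact zero_mem _
  · rw [h.orth _ _ _ _ h1]; exact zero_mem _

/-- the algebra generated by matrix units -/
def muAlg {s : J → S} {e : J → J → A} (h : IsMU s e) : NonUnitalStarSubalgebra ℂ A where
  carrier := mspan e
  add_mem' := fun hx hy => add_mem hx hy
  zero_mem' := zero_mem _
  smul_mem' := fun c _ hx => Submodule.smul_mem _ c hx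
  mul_mem' := by
    intro x y hx hy
    refine mspan_induct (P := fun x => x * y ∈ mspan e) hx (fun α β => ?_) (by simp)
      (fun a b ha hb => by rw [add_mul]; exact add_mem ha hb)
      (fun c a ha => by rw [smul_mul_assoc]; exact Submodule.smul_mem _ _ ha)
    refine mspan_induct (P := fun y => e α β * y ∈ mspan e) hy (fun γ δ => mspan_mul h _ _ _ _)
      (by simp) (fun a b ha hb => by rw [mul_add]; exact add_mem ha hb)
      (fun c a ha => by rw [mul_smul_comm]; exact Submodule.smul_mem _ _ ha)
  star_mem' := by
    intro x hx
    refine mspan_induct (P := fun x => star x ∈ mspan e) hx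
      (fun α β => by rw [h.star]; exact mem_mspan _ _ _) (by simp)
      (fun a b ha hb => by rw [star_add]; exact add_mem ha hb)
      (fun c a ha => by rw [star_smul]; exact Submodule.smul_mem _ _ ha)

lemma mem_muAlg {s : J → S} {e : J → J → A} (h : IsMU s e) {x : A} :
    x ∈ muAlg h ↔ x ∈ mspan e := Iff.rfl

instance muAlg_fd [Finite J] {s : J → S} {e : J → J → A} (h : IsMU s e) :
    FiniteDimensional ℂ (muAlg h) :=
  FiniteDimensional.span_of_finite ℂ (Set.finite_range _)

/-- linear maps that are *-homs on a fd subalgebra are contractive there -/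
lemma hom_contractive (C : NonUnitalStarSubalgebra ℂ A) [FiniteDimensional ℂ C] (T : A →ₗ[ℂ] B)
    (hm : ∀ x ∈ C, ∀ y ∈ C, T (x * y) = T x * T y) (hs : ∀ x ∈ C, T (star x) = star (T x))
    {x : A} (hx : x ∈ C) : ‖T x‖ ≤ ‖x‖ := by
  have hcl : IsClosed (C : Set A) := fd_closed C
  let _ : NonUnitalCStarAlgebra C := NonUnitalStarSubalgebra.nonUnitalCStarAlgebra C (h_closed := hcl)
  let φ : C →⋆ₙₐ[ℂ] B :=
    { toFun := fun x => T x
      map_smul' := fun c x => by simp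
      map_zero' := by simp
      map_add' := fun x y => by simp
      map_mul' := fun x y => hm _ x.2 _ y.2
      map_star' := fun x => hs _ x.2 }
  exact NonUnitalStarAlgHom.norm_apply_le φ ⟨x, hx⟩

lemma mspan_hom {s : J → S} {e : J → J → A} {f : J → J → B} (he : IsMU s e) (hf : IsMU s f)
    (T : A →ₗ[ℂ] B) (hT : ∀ α β, T (e α β) = f α β) :
    (∀ x ∈ muAlg he, ∀ y ∈ muAlg he, T (x * y) = T x * T y) ∧
    (∀ x ∈ muAlg he, T (star x) = star (T x)) := by
  constructor
  · intro x hx y hy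
    refine mspan_induct (P := fun x => T (x * y) = T x * T y) hx (fun α β => ?_) (by simp)
      (fun a b ha hb => by rw [add_mul, map_add, map_add, ha, hb, add_mul])
      (fun c a ha => by rw [smul_mul_assoc, map_smul, map_smul, ha, smul_mul_assoc])
    refine mspan_induct (P := fun y => T (e α β * y) = T (e α β) * T y) hy (fun γ δ => ?_) (by simp)
      (fun a b ha hb => by rw [mul_add, map_add, map_add, ha, hb, mul_add])
      (fun c a ha => by rw [mul_smul_comm, map_smul, map_smul, ha, mul_smul_comm])
    rw [hT, hT]
    by_cases h1 : β = γ
    · subst h1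
      by_cases hs : s α = s β
      · rw [he.mul _ _ _ hs, hf.mul _ _ _ hs, hT]
      · rw [he.zero _ _ hs, hf.zero _ _ hs]; simp
    · rw [he.orth _ _ _ _ h1, hf.orth _ _ _ _ h1, map_zero]
  · intro x hx
    refine mspan_induct (P := fun x => T (star x) = star (T x)) hx
      (fun α β => by rw [he.star, hT, hT, hf.star]) (by simp)
      (fun a b ha hb => by rw [star_add, map_add, map_add, ha, hb, star_add])
      (fun c a ha => by rw [star_smul, map_smul, map_smul, ha, star_smul])

lemma exists_fun (x : A) : ∃ f : A →ₗ[ℂ] ℂ, x ≠ 0 → f x = 1 := by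
  by_cases hx : x = 0
  · exact ⟨0, fun h => absurd hx h⟩
  · obtain ⟨f, hf⟩ := SeparatingDual.exists_eq_one (R := ℂ) hx
    exact ⟨f.toLinearMap, fun _ => hf⟩

/-- Compression lemma. -/
lemma compression [Fintype J] {s : J → S} {E : J → J → A} {e : J → J → B}
    (hE : IsMU s E) (he : IsMU s e) :
    ∃ T : A →ₗ[ℂ] B, (∀ α β, T (E α β) = e α β) ∧
      ∀ (b : A) (c : J → J → ℂ), (∀ α β, s α = s β → E α α * b * E β β = c α β • E α β) →
        T b = ∑ α, ∑ β, c α β • e α β ∧ ‖T b‖ ≤ ‖b‖ := by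
  classical
  choose f hf using fun (p : J × J) => exists_fun (E p.1 p.2)
  let T : A →ₗ[ℂ] B := ∑ α, ∑ β,
    ((f (α, β)).comp ((LinearMap.mulLeft ℂ (E α α)).comp (LinearMap.mulRight ℂ (E β β)))).smulRight
      (e α β)
  have hT : ∀ b, T b = ∑ α, ∑ β, f (α, β) (E α α * b * E β β) • e α β := by
    intro b
    simp [T, LinearMap.sum_apply, mul_assoc]
  have hcoef : ∀ (b : A) (c : J → J → ℂ),
      (∀ α β, s α = s β → E α α * b * E β β = c α β • E α β) →
        T b = ∑ α, ∑ β, c α β • e α β := by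
    intro b c h
    rw [hT]
    refine Finset.sum_congr rfl fun α _ => Finset.sum_congr rfl fun β _ => ?_
    by_cases hs : s α = s β
    · rw [h _ _ hs, map_smul, hf (α, β) (hE.ne' _ _ hs), smul_eq_mul, mul_one]
    · rw [he.zero _ _ hs]; simp
  have hunit : ∀ α β, T (E α β) = e α β := by
    intro γ δ
    rw [hcoef (E γ δ) (fun α β => if α = γ ∧ β = δ then 1 else 0)]
    · rw [Finset.sum_eq_single γ, Finset.sum_eq_single δ]
      · simp
      · intro β _ hb; simp [hb]
      · simp
      · intro α _ ha; simp [ha]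
      · simp
    · intro α β _
      by_cases h1 : α = γ
      · subst h1
        by_cases h2 : β = δ
        · subst h2; simp [hE.left, hE.right]
        · simp [h2, hE.left, hE.orth _ _ _ _ (Ne.symm h2)]
      · simp [h1, hE.orth _ _ _ _ h1]
  refine ⟨T, hunit, fun b c h => ⟨hcoef b c h, ?_⟩⟩
  let q : S → A := fun t => ∑ α, if s α = t then E α α else 0
  have hqs : ∀ t, star (q t) = q t := by
    intro t
    simp only [q, star_sum]
    refine Finset.sum_congr rfl fun α _ => ?_
    split_ifs
    · exact hE.star _ _
    · simp
  have hEq : ∀ α t, E α α * q t = if s α = t then E α α else 0 := by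
    intro α t
    simp only [q, Finset.mul_sum]
    rw [Finset.sum_eq_single α]
    · split_ifs
      · exact hE.left _ _
      · simp
    · intro β _ hb
      split_ifs
      · exact hE.orth _ _ _ _ (Ne.symm hb)
      · simp
    · simp
  have hqq : ∀ t t', q t * q t' = if t = t' then q t else 0 := by
    intro t t'
    conv_lhs => simp only [q]
    rw [Finset.sum_mul]
    by_cases h1 : t = t'
    · subst h1
      simp only [if_true]
      simp only [q]
      refine Finset.sum_congr rfl fun α _ => ?_
      split_ifs with h2
      · rw [hEq, if_pos h2]
      · simp
    · rw [if_neg h1]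
      refine Finset.sum_eq_zero fun α _ => ?_
      split_ifs with h2
      · rw [hEq, if_neg (by rw [h2]; exact h1)]
      · simp
  let ss : Finset S := Finset.univ.image s
  let b' : A := ∑ t ∈ ss, q t * b * q t
  have hqn : ∀ t, ‖q t‖ ≤ 1 := fun t => IsPr.norm_le ⟨by rw [hqq]; simp, hqs t⟩
  have hb'n : ‖b'‖ ≤ ‖b‖ := by
    refine orth_norm_sum ss _ (norm_nonneg b) ?_ ?_ ?_
    · intro i _ j _ hij
      rw [star_mul, star_mul, hqs, show q i * (star b * q i) * (q j * b * q j) =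
        q i * star b * (q i * q j) * b * q j by simp only [mul_assoc], hqq, if_neg hij]
      simp
    · intro i _ j _ hij
      rw [star_mul, star_mul, hqs, show q i * b * q i * (q j * (star b * q j)) =
        q i * b * (q i * q j) * star b * q j by simp only [mul_assoc], hqq, if_neg hij]
      simp
    · intro i _
      calc ‖q i * b * q i‖ ≤ ‖q i‖ * ‖b‖ * ‖q i‖ := norm_mul₃_le
        _ ≤ 1 * ‖b‖ * 1 := by gcongr <;> exact hqn _
        _ = ‖b‖ := by ring
  have hqE : ∀ α t, q t * E α α = if s α = t then E α α else 0 := by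
    intro α t
    have := congrArg star (hEq α t)
    rw [star_mul, hqs, hE.star] at this
    rw [this]
    split_ifs
    · exact hE.star _ _
    · simp
  have hTb' : T b' = T b := by
    rw [hcoef b c h]
    apply hcoef
    intro α β hs
    simp only [b', Finset.mul_sum, Finset.sum_mul]
    rw [Finset.sum_eq_single (s α)]
    · rw [show E α α * (q (s α) * b * q (s α)) * E β β =
        (E α α * q (s α)) * b * (q (s α) * E β β) by simp only [mul_assoc], hEq, hqE, if_pos rfl,
        if_pos hs.symm]
      exact h _ _ hs
    · intro t _ ht
      rw [show E α α * (q t * b * q t) * E β β =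
        (E α α * q t) * b * (q t * E β β) by simp only [mul_assoc], hEq, if_neg (Ne.symm ht)]
      simp
    · intro hh; exact absurd (Finset.mem_image_of_mem s (Finset.mem_univ α)) hh
  have hb'm : b' ∈ muAlg hE := by
    refine sum_mem fun t _ => ?_
    have : q t * b * q t = ∑ α, ∑ β, (if s α = t then E α α else 0) * b *
        (if s β = t then E β β else 0) := by
      simp only [q, Finset.sum_mul, Finset.mul_sum]
      rw [Finset.sum_comm]
    rw [this]
    refine sum_mem fun α _ => sum_mem fun β _ => ?_
    by_cases h1 : s α = t
    · by_cases h2 : s β = t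
      · rw [if_pos h1, if_pos h2, h _ _ (h1.trans h2.symm)]
        exact SMulMemClass.smul_mem _ (mem_mspan E α β)
      · rw [if_neg h2, mul_zero]; exact zero_mem _
    · rw [if_neg h1, zero_mul, zero_mul]; exact zero_mem _
  rw [← hTb']
  obtain ⟨m1, m2⟩ := mspan_hom hE he T hunit
  exact (hom_contractive (muAlg hE) T m1 m2 hb'm).trans hb'n

end MatrixUnits

end FermionAF

namespace FermionAF

set_option linter.unusedVariables false
set_option linter.unusedSectionVars false

section Refine

variable {A : Type*} [NonUnitalCStarAlgebra A]
variable {J S Λ S' K : Type*}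

/-- matrix units from minimal projections -/
lemma exists_mu (C : NonUnitalStarSubalgebra ℂ A) (f : Λ → A) (hf : ∀ l, IsMinPr C (f l))
    (ho : ∀ l l', l ≠ l' → f l * f l' = 0) :
    ∃ (s' : Λ → Λ) (g : Λ → Λ → A), IsMU s' g ∧ (∀ l, g l l = f l) ∧ (∀ l l', g l l' ∈ C) ∧
      (∀ l l', ∀ c ∈ C, ∃ z : ℂ, f l * c * f l' = z • g l l') := by
  classical
  let r : Λ → Λ → Prop := fun l l' =>
    ∃ v ∈ C, v * star v = f l ∧ star v * v = f l' ∧ f l * v = v ∧ v * f l' = v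
  have hpr : ∀ l, f l * f l = f l := fun l => (hf l).2.1.1
  have hst : ∀ l, star (f l) = f l := fun l => (hf l).2.1.2
  have rrefl : ∀ l, r l l := fun l =>
    ⟨f l, (hf l).1, by rw [hst, hpr], by rw [hst, hpr], hpr l, hpr l⟩
  have rsymm : ∀ {l l'}, r l l' → r l' l := by
    rintro l l' ⟨v, vC, v1, v2, v3, v4⟩
    refine ⟨star v, star_mem vC, by rw [star_star, v2], by rw [star_star, v1], ?_, ?_⟩
    · have := congrArg star v4; rwa [star_mul, hst] at this
    · have := congrArg star v3; rwa [star_mul, hst] at this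
  have rtrans : ∀ {l l' l''}, r l l' → r l' l'' → r l l'' := by
    rintro l l' l'' ⟨v, vC, v1, v2, v3, v4⟩ ⟨w, wC, w1, w2, w3, w4⟩
    refine ⟨v * w, mul_mem vC wC, ?_, ?_, by rw [← mul_assoc, v3], by rw [mul_assoc, w4]⟩
    · rw [star_mul, mul_assoc, ← mul_assoc w, w1, ← mul_assoc, v4, v1]
    · rw [star_mul, mul_assoc, ← mul_assoc (star v), v2, w3, w2]
  let st : Setoid Λ := ⟨r, rrefl, rsymm, rtrans⟩
  let s' : Λ → Λ := fun l => (Quotient.mk st l).out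
  have hs' : ∀ l, r l (s' l) := fun l => rsymm (Quotient.mk_out (s := st) l)
  have hs'' : ∀ l l', r l l' → s' l = s' l' := fun l l' h =>
    congrArg Quotient.out (Quotient.sound (s := st) h)
  choose v vC v1 v2 v3 v4 using hs'
  have v5 : ∀ l, star (v l) * f l = star (v l) := fun l => by
    have := congrArg star (v3 l); rwa [star_mul, hst] at this
  have hmu : IsMU s' (fun l l' => if s' l = s' l' then v l * star (v l') else 0) :=
    { ne := fun l => by rw [if_pos rfl, v1]; exact (hf l).2.2.1
      zero := fun l l' h => if_neg h
      mul := by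
        intro l l' l'' h
        rw [if_pos h]
        by_cases h2 : s' l' = s' l''
        · rw [if_pos h2, if_pos (h.trans h2), mul_assoc, ← mul_assoc (star (v l')), v2, ← h,
            ← mul_assoc, v4]
        · rw [if_neg h2, if_neg (by rw [h]; exact h2), mul_zero]
      orth := by
        intro l l' m m' h
        split_ifs
        · rw [← v5 l', ← v3 m, mul_assoc, mul_assoc, mul_assoc, ← mul_assoc (f l'), ho _ _ h]
          simp
        · simp
        · simp
        · simp
      star := by
        intro l l'
        by_cases h : s' l = s' l'
        · rw [if_pos h, if_pos h.symm, star_mul, star_star]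
        · rw [if_neg h, if_neg (Ne.symm h), star_zero] }
  refine ⟨s', _, hmu, fun l => by rw [if_pos rfl, v1], ?_, ?_⟩
  · intro l l'
    split_ifs
    · exact mul_mem (vC _) (star_mem (vC _))
    · exact zero_mem _
  · intro l l' c hc
    by_cases h : s' l = s' l'
    · obtain ⟨z, hz⟩ := (hf l).2.2.2 (c * (v l' * star (v l)))
        (mul_mem hc (mul_mem (vC _) (star_mem (vC _))))
      refine ⟨z, ?_⟩
      rw [if_pos h]
      have e1 : v l' * star (v l) * (v l * star (v l')) = f l' := by
        rw [mul_assoc, ← mul_assoc (star (v l)), v2, h, ← mul_assoc, v4, v1]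
      calc f l * c * f l' = f l * c * (v l' * star (v l) * (v l * star (v l'))) := by rw [e1]
        _ = f l * c * (v l' * (star (v l) * f l) * (v l * star (v l'))) := by rw [v5]
        _ = (f l * (c * (v l' * star (v l))) * f l) * (v l * star (v l')) := by
          simp only [mul_assoc]
        _ = _ := by rw [hz, smul_mul_assoc, ← mul_assoc, v3]
    · refine ⟨0, ?_⟩
      rw [zero_smul]
      by_contra h0
      exact h (hs'' _ _ (exists_pi (hf l) (hf l') hc h0))

/-- tensored matrix units -/
def tens (e : J → J → A) (g : Λ → Λ → A) (t : Λ → J) (a : K → J) (l : K → Λ) (x y : K) : A :=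
  e (a x) (t (l x)) * g (l x) (l y) * e (t (l y)) (a y)

lemma tens_abs_left {s : J → S} {e : J → J → A} {s' : Λ → S'} {g : Λ → Λ → A} (he : IsMU s e)
    (hg : IsMU s' g) {t : Λ → J} (h1 : ∀ l, e (t l) (t l) * g l l = g l l) (l l' : Λ) :
    e (t l) (t l) * g l l' = g l l' := by
  rw [← hg.left l l', ← mul_assoc, h1]

lemma tens_abs_right {s : J → S} {e : J → J → A} {s' : Λ → S'} {g : Λ → Λ → A} (he : IsMU s e)
    (hg : IsMU s' g) {t : Λ → J} (h1 : ∀ l, e (t l) (t l) * g l l = g l l) (l l' : Λ) :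
    g l l' * e (t l') (t l') = g l l' := by
  have := congrArg star (tens_abs_left he hg h1 l' l)
  rwa [star_mul, hg.star, he.star] at this

lemma tensor_mu {s : J → S} {e : J → J → A} {s' : Λ → S'} {g : Λ → Λ → A} (he : IsMU s e)
    (hg : IsMU s' g) {t : Λ → J} (h1 : ∀ l, e (t l) (t l) * g l l = g l l)
    (h2 : ∀ l l', s (t l) = s (t l') → t l = t l') {a : K → J} {l : K → Λ}
    (hinj : ∀ x y, a x = a y → l x = l y → x = y) (hs : ∀ x, s (a x) = s (t (l x))) :
    IsMU (fun x => s' (l x)) (tens e g t a l) where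
  ne x := by
    intro h0
    have : e (t (l x)) (a x) * tens e g t a l x x * e (a x) (t (l x)) = g (l x) (l x) := by
      rw [tens, show e (t (l x)) (a x) * (e (a x) (t (l x)) * g (l x) (l x) * e (t (l x)) (a x)) *
        e (a x) (t (l x)) = (e (t (l x)) (a x) * e (a x) (t (l x))) * g (l x) (l x) *
        (e (t (l x)) (a x) * e (a x) (t (l x))) by simp only [mul_assoc],
        he.mul _ _ _ (hs x).symm, h1, tens_abs_right he hg h1]
    rw [h0] at this
    simp at this
    exact hg.ne _ this.symm
  zero x y h := by rw [tens, hg.zero _ _ h]; simp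
  mul x y z h := by
    rw [tens, tens, show e (a x) (t (l x)) * g (l x) (l y) * e (t (l y)) (a y) *
      (e (a y) (t (l y)) * g (l y) (l z) * e (t (l z)) (a z)) = e (a x) (t (l x)) *
      (g (l x) (l y) * (e (t (l y)) (a y) * e (a y) (t (l y))) * g (l y) (l z)) *
      e (t (l z)) (a z) by simp only [mul_assoc], he.mul _ _ _ (hs y).symm,
      tens_abs_right he hg h1, hg.mul _ _ _ h]
    rfl
  orth x y z w h := by
    rw [tens, tens, show e (a x) (t (l x)) * g (l x) (l y) * e (t (l y)) (a y) *
      (e (a z) (t (l z)) * g (l z) (l w) * e (t (l w)) (a w)) = e (a x) (t (l x)) *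
      (g (l x) (l y) * (e (t (l y)) (a y) * e (a z) (t (l z))) * g (l z) (l w)) *
      e (t (l w)) (a w) by simp only [mul_assoc]]
    by_cases h3 : a y = a z
    · rw [← h3, he.mul _ _ _ (hs y).symm]
      have h4 : t (l y) = t (l z) := h2 _ _ (by rw [← hs y, ← hs z, h3])
      rw [← h4, tens_abs_right he hg h1, hg.orth _ _ _ _ (fun h5 => h (hinj _ _ h3 h5))]
      simp
    · rw [he.orth _ _ _ _ h3]; simp
  star x y := by
    rw [tens, star_mul, star_mul, he.star, he.star, hg.star, tens, mul_assoc]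

/-- left multiplication of tensored units by the old ones -/
lemma tens_left {s : J → S} {e : J → J → A} (he : IsMU s e) (g : Λ → Λ → A) (t : Λ → J)
    (a : K → J) (l : K → Λ) (α : J) (x y x' : K) (h1 : a x' = α) (h2 : l x' = l x)
    (hs : s α = s (a x)) : e α (a x) * tens e g t a l x y = tens e g t a l x' y := by
  rw [tens, tens, ← mul_assoc, ← mul_assoc, he.mul _ _ _ hs, h1, h2]

lemma tens_left_zero {s : J → S} {e : J → J → A} (he : IsMU s e) (g : Λ → Λ → A) (t : Λ → J)
    (a : K → J) (l : K → Λ) (α β : J) (x y : K) (h1 : β ≠ a x) :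
    e α β * tens e g t a l x y = 0 := by
  rw [tens, ← mul_assoc, ← mul_assoc, he.orth _ _ _ _ h1]; simp

/-- corners of tensored units -/
lemma tens_scalar {s : J → S} {e : J → J → A} {s' : Λ → S'} {g : Λ → Λ → A} (he : IsMU s e)
    (hg : IsMU s' g) {t : Λ → J} (h1 : ∀ l, e (t l) (t l) * g l l = g l l)
    {a : K → J} {l : K → Λ} (hs : ∀ x, s (a x) = s (t (l x)))
    (C : NonUnitalStarSubalgebra ℂ A) (heC : ∀ α β, e α β ∈ C)
    (hsc : ∀ l l', ∀ c ∈ C, ∃ z : ℂ, g l l * c * g l' l' = z • g l l') (x y : K) (c : A)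
    (hc : c ∈ C) : ∃ z : ℂ, tens e g t a l x x * c * tens e g t a l y y =
      z • tens e g t a l x y := by
  obtain ⟨z, hz⟩ := hsc (l x) (l y) (e (t (l x)) (a x) * c * e (a y) (t (l y)))
    (mul_mem (mul_mem (heC _ _) hc) (heC _ _))
  refine ⟨z, ?_⟩
  calc _ = e (a x) (t (l x)) * (g (l x) (l x) * (e (t (l x)) (a x) * c * e (a y) (t (l y))) *
        g (l y) (l y)) * e (t (l y)) (a y) := by simp only [tens, mul_assoc]
    _ = _ := by rw [hz, mul_smul_comm, smul_mul_assoc]; rfl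

/-- Index set of the refinement. -/
def KK (s : J → S) (t : Λ → J) : Type _ := {x : J × Λ // s x.1 = s (t x.2)}

def KK.a {s : J → S} {t : Λ → J} (x : KK s t) : J := x.1.1
def KK.l {s : J → S} {t : Λ → J} (x : KK s t) : Λ := x.1.2
def KK.mk {s : J → S} {t : Λ → J} (α : J) (l : Λ) (h : s α = s (t l)) : KK s t := ⟨(α, l), h⟩

noncomputable instance [Fintype J] [Fintype Λ] (s : J → S) (t : Λ → J) : Fintype (KK s t) := by
  classical
  exact inferInstanceAs (Fintype {x : J × Λ // s x.1 = s (t x.2)})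

lemma KK.inj {s : J → S} {t : Λ → J} (x y : KK s t) (h1 : x.a = y.a) (h2 : x.l = y.l) : x = y :=
  Subtype.ext (Prod.ext h1 h2)

lemma KK.hs {s : J → S} {t : Λ → J} (x : KK s t) : s x.a = s (t x.l) := x.2

/-- Data of a refinement. -/
structure IsRef (C : NonUnitalStarSubalgebra ℂ A) (s : J → S) (e : J → J → A) [Fintype Λ]
    [DecidableEq J]
    (t : Λ → J) (s' : Λ → S') (g : Λ → Λ → A) : Prop where
  mu : IsMU s' g
  abs : ∀ l, e (t l) (t l) * g l l = g l l
  rep : ∀ l l', s (t l) = s (t l') → t l = t l'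
  ex : ∀ α, ∃ l, s α = s (t l)
  mem : ∀ l l', g l l' ∈ C
  sc : ∀ l l', ∀ c ∈ C, ∃ z : ℂ, g l l * c * g l' l' = z • g l l'
  sum : ∀ l0, ∑ l, (if t l = t l0 then g l l else 0) = e (t l0) (t l0)

lemma exists_ref {J S : Type} [Fintype J] [DecidableEq J] (C : NonUnitalStarSubalgebra ℂ A)
    [FiniteDimensional ℂ C] {s : J → S} {e : J → J → A} (he : IsMU s e)
    (heC : ∀ α β, e α β ∈ C) :
    ∃ (Λ : Type) (_ : Fintype Λ) (t : Λ → J) (s' : Λ → Λ) (g : Λ → Λ → A),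
      IsRef C s e t s' g := by
  classical
  let ρ : J → J := fun α => (Quotient.mk (Setoid.ker s) α).out
  have hρ : ∀ α, s (ρ α) = s α := fun α => Quotient.mk_out (s := Setoid.ker s) α
  have hρ' : ∀ α β, s α = s β → ρ α = ρ β := fun α β h =>
    congrArg Quotient.out (Quotient.sound (s := Setoid.ker s) h)
  choose n f f1 f2 f3 f4 using fun α => exists_decomp C (he.pr α) (heC α α)
  let Λ : Type := Σ r : {α // ρ α = α}, Fin (n r.1)
  let t : Λ → J := fun l => l.1.1
  let ff : Λ → A := fun l => f l.1.1 l.2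
  have hrep : ∀ l l' : Λ, s (t l) = s (t l') → t l = t l' := fun l l' h => by
    have := hρ' _ _ h
    rwa [l.1.2, l'.1.2] at this
  have ho : ∀ l l' : Λ, l ≠ l' → ff l * ff l' = 0 := by
    rintro ⟨r, i⟩ ⟨r', i'⟩ h
    by_cases hr : r = r'
    · subst hr
      exact f2 _ _ _ (fun hh => h (by have h3 : i = i' := hh; rw [h3]))
    · simp only [ff]
      rw [← (f4 r.1 i).2, ← (f4 r'.1 i').1, mul_assoc, ← mul_assoc (e r.1 r.1),
        he.orth _ _ _ _ (fun hh => hr (Subtype.ext hh))]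
      simp
  obtain ⟨s', g, hg, g1, g2, g3⟩ := exists_mu C ff (fun l => f1 _ _) ho
  refine ⟨Λ, inferInstance, t, s', g, hg, fun l => ?_, hrep, fun α => ?_, g2, fun l l' c hc => ?_,
    fun l0 => ?_⟩
  · rw [g1]; exact (f4 _ _).1
  · have hn : n (ρ α) ≠ 0 := by
      intro h0
      have h3 := f3 (ρ α)
      have : IsEmpty (Fin (n (ρ α))) := by rw [h0]; infer_instance
      rw [Finset.univ_eq_empty, Finset.sum_empty] at h3
      exact he.ne _ h3.symm
    exact ⟨⟨⟨ρ α, hρ' _ _ (hρ α)⟩, ⟨0, Nat.pos_of_ne_zero hn⟩⟩, (hρ α).symm⟩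
  · rw [g1, g1]; exact g3 _ _ _ hc
  · rw [Fintype.sum_sigma, Finset.sum_eq_single l0.1]
    · simp only [t, if_true, g1, ff]
      exact f3 _
    · intro r _ hr
      refine Finset.sum_eq_zero fun i _ => if_neg fun hh => hr (Subtype.ext hh)
    · simp

variable [Fintype J] [DecidableEq J] [Fintype Λ] {C : NonUnitalStarSubalgebra ℂ A}
  {s : J → S} {e : J → J → A} {t : Λ → J} {s' : Λ → S'} {g : Λ → Λ → A}

/-- refined matrix units -/
def ref (s : J → S) (e : J → J → A) (t : Λ → J) (g : Λ → Λ → A) (x y : KK s t) : A :=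
  tens e g t KK.a KK.l x y

lemma IsRef.ref_mu (h : IsRef C s e t s' g) (he : IsMU s e) :
    IsMU (fun x : KK s t => s' x.l) (ref s e t g) :=
  tensor_mu he h.mu h.abs h.rep KK.inj KK.hs

open Classical in
lemma IsRef.key (h : IsRef C s e t s' g) (he : IsMU s e) (α β : J) :
    e α β = ∑ x : KK s t, ∑ y : KK s t,
      if x.a = α ∧ y.a = β ∧ x.l = y.l then ref s e t g x y else 0 := by
  by_cases hs : s α = s β
  · obtain ⟨l0, hl0⟩ := h.ex α
    have e1 : e α β = ∑ l, if t l = t l0 then e α (t l) * g l l * e (t l) β else 0 := by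
      calc e α β = e α (t l0) * e (t l0) (t l0) * e (t l0) β := by
            rw [he.right, he.mul _ _ _ hl0]
        _ = _ := by
          rw [← h.sum l0, Finset.mul_sum, Finset.sum_mul]
          refine Finset.sum_congr rfl fun l _ => ?_
          split_ifs with h1
          · rw [h1]
          · simp
    have hc : ∀ l, t l = t l0 ↔ s α = s (t l) := fun l =>
      ⟨fun hh => by rw [hh]; exact hl0, fun hh => h.rep _ _ (hh.symm.trans hl0)⟩
    have e2 : ∀ x : KK s t, (∑ y : KK s t,
        if x.a = α ∧ y.a = β ∧ x.l = y.l then ref s e t g x y else 0) =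
        if x.a = α then e α (t x.l) * g x.l x.l * e (t x.l) β else 0 := by
      intro x
      by_cases hx : x.a = α
      · have hb : s β = s (t x.l) := by rw [← hs, ← hx]; exact x.hs
        rw [Finset.sum_eq_single (KK.mk β x.l hb)]
        · rw [if_pos ⟨hx, rfl, rfl⟩, if_pos hx, ← hx]; rfl
        · intro y _ hy
          refine if_neg ?_
          rintro ⟨-, h2, h3⟩
          exact hy (KK.inj _ _ h2 h3.symm)
        · simp
      · simp [hx]
    rw [e1]
    simp only [e2]
    rw [← Finset.sum_filter, ← Finset.sum_filter]
    symm
    refine Finset.sum_bij (fun x _ => x.l) ?_ ?_ ?_ ?_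
    · intro x hx
      simp only [Finset.mem_filter, Finset.mem_univ, true_and] at hx ⊢
      rw [hc, ← hx]; exact x.hs
    · intro x hx y hy hxy
      simp only [Finset.mem_filter, Finset.mem_univ, true_and] at hx hy
      exact KK.inj _ _ (hx.trans hy.symm) hxy
    · intro l hl
      simp only [Finset.mem_filter, Finset.mem_univ, true_and] at hl
      exact ⟨KK.mk α l ((hc l).1 hl), Finset.mem_filter.2 ⟨Finset.mem_univ _, rfl⟩, rfl⟩
    · intro x hx; rfl
  · rw [he.zero _ _ hs]
    symm
    refine Finset.sum_eq_zero fun x _ => Finset.sum_eq_zero fun y _ => if_neg ?_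
    rintro ⟨rfl, rfl, h3⟩
    exact hs (by rw [x.hs, y.hs, h3])

lemma IsRef.ref_mem (h : IsRef C s e t s' g) (heC : ∀ α β, e α β ∈ C) (x y : KK s t) :
    ref s e t g x y ∈ C := mul_mem (mul_mem (heC _ _) (h.mem _ _)) (heC _ _)

lemma IsRef.ref_sc (h : IsRef C s e t s' g) (he : IsMU s e) (heC : ∀ α β, e α β ∈ C)
    (x y : KK s t) (c : A) (hc : c ∈ C) : ∃ z : ℂ, ref s e t g x x * c * ref s e t g y y =
      z • ref s e t g x y :=
  tens_scalar he h.mu h.abs KK.hs C heC h.sc x y c hc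

lemma IsRef.ref_sum (h : IsRef C s e t s' g) (he : IsMU s e) :
    ∑ x : KK s t, ref s e t g x x = ∑ α, e α α := by
  classical
  have : ∀ α, e α α = ∑ x : KK s t, if x.a = α then ref s e t g x x else 0 := by
    intro α
    rw [h.key he α α]
    refine Finset.sum_congr rfl fun x _ => ?_
    rw [Finset.sum_eq_single x]
    · simp
    · intro y _ hy
      refine if_neg ?_
      rintro ⟨h1, h2, h3⟩
      exact hy (KK.inj _ _ (h2.trans h1.symm) h3.symm)
    · simp
  simp only [this]
  rw [Finset.sum_comm]
  simp

/-- the refined units span -/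
lemma IsRef.ref_span (h : IsRef C s e t s' g) (he : IsMU s e) (heC : ∀ α β, e α β ∈ C)
    (hu : ∀ c ∈ C, (∑ α, e α α) * c = c ∧ c * (∑ α, e α α) = c) (c : A) (hc : c ∈ C) :
    c ∈ mspan (ref s e t g) := by
  have : c = ∑ x : KK s t, ∑ y : KK s t, ref s e t g x x * c * ref s e t g y y := by
    calc c = (∑ α, e α α) * c * (∑ α, e α α) := by rw [(hu c hc).1, (hu c hc).2]
      _ = _ := by
        rw [← h.ref_sum he, Finset.sum_mul, Finset.sum_mul]
        simp only [Finset.mul_sum]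
  rw [this]
  refine sum_mem fun x _ => sum_mem fun y _ => ?_
  obtain ⟨z, hz⟩ := h.ref_sc he heC x y c hc
  rw [hz]
  exact Submodule.smul_mem _ _ (mem_mspan _ _ _)

end Refine

end FermionAF

namespace FermionAF

set_option linter.unusedVariables false

section Ferm

variable {A : Type*} [NonUnitalCStarAlgebra A]

/-- elements orthogonal to the ideal generated by `f` -/
def annIdeal (C : NonUnitalStarSubalgebra ℂ A) (f : A) (hf : star f = f) :
    NonUnitalStarSubalgebra ℂ A where
  carrier := {x | x ∈ C ∧ (∀ c ∈ C, f * c * x = 0) ∧ (∀ c ∈ C, x * c * f = 0)}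
  add_mem' := by
    rintro x y ⟨h1, h2, h3⟩ ⟨k1, k2, k3⟩
    exact ⟨add_mem h1 k1, fun c hc => by rw [mul_add, h2 c hc, k2 c hc, add_zero],
      fun c hc => by rw [add_mul, add_mul, h3 c hc, k3 c hc, add_zero]⟩
  zero_mem' := ⟨zero_mem _, by simp, by simp⟩
  mul_mem' := by
    rintro x y ⟨h1, h2, h3⟩ ⟨k1, k2, k3⟩
    exact ⟨mul_mem h1 k1, fun c hc => by rw [← mul_assoc, h2 c hc, zero_mul],
      fun c hc => by rw [mul_assoc, mul_assoc, ← mul_assoc y, k3 c hc, mul_zero]⟩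
  smul_mem' := by
    rintro z x ⟨h1, h2, h3⟩
    exact ⟨SMulMemClass.smul_mem z h1, fun c hc => by rw [mul_smul_comm, h2 c hc, smul_zero],
      fun c hc => by rw [smul_mul_assoc, smul_mul_assoc, h3 c hc, smul_zero]⟩
  star_mem' := by
    rintro x ⟨h1, h2, h3⟩
    refine ⟨star_mem h1, fun c hc => ?_, fun c hc => ?_⟩
    · have := congrArg star (h3 _ (star_mem hc))
      rwa [star_mul, star_mul, star_star, hf, star_zero, ← mul_assoc] at this
    · have := congrArg star (h2 _ (star_mem hc))
      rwa [star_mul, star_mul, star_star, hf, star_zero, ← mul_assoc] at this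

instance (C : NonUnitalStarSubalgebra ℂ A) [FiniteDimensional ℂ C] (f : A) (hf : star f = f) :
    FiniteDimensional ℂ (annIdeal C f hf) := fd_of_le (C := C) (fun _ hx => hx.1)

/-- Fermion data along a subsequence. -/
structure Ferm (C : ℕ → NonUnitalStarSubalgebra ℂ A) (p : ℕ → A) : Prop where
  mono : Monotone C
  fd : ∀ k, FiniteDimensional ℂ (C k)
  dense : Dense (⋃ k, (C k : Set A))
  mem : ∀ k, p k ∈ C k
  pr : ∀ k, IsPr (p k)
  ne : ∀ k, p k ≠ 0
  central : ∀ k, ∀ a ∈ C k, p k * a = a * p k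
  minc : ∀ k, ∀ q ∈ C k, IsPr q → (∀ a ∈ C k, q * a = a * q) → q * p k = q → q ≠ 0 → q = p k
  step : ∀ k e, IsMinPr (C k) e → e * p k = e → ∃ q ∈ C (k + 1), IsPr q ∧ q ≠ 0 ∧
    q * (p (k + 1) * e) = q ∧ (p (k + 1) * e) * q = q ∧ q ≠ p (k + 1) * e

lemma linked (C : NonUnitalStarSubalgebra ℂ A) [FiniteDimensional ℂ C] {p : A} (hpC : p ∈ C)
    (hp : IsPr p) (hcen : ∀ a ∈ C, p * a = a * p)
    (hmin : ∀ q ∈ C, IsPr q → (∀ a ∈ C, q * a = a * q) → q * p = q → q ≠ 0 → q = p)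
    {f1 f2 : A} (h1C : f1 ∈ C) (h2C : f2 ∈ C) (h1 : IsPr f1) (h2 : IsPr f2) (h1n : f1 ≠ 0)
    (h2n : f2 ≠ 0) (h1p : f1 * p = f1) (h2p : f2 * p = f2) : ∃ c ∈ C, f1 * c * f2 ≠ 0 := by
  by_contra hno
  push Not at hno
  obtain ⟨z, hzI, hz, hz2⟩ := exists_unit (annIdeal C f1 h1.2)
  have hf2 : f2 ∈ annIdeal C f1 h1.2 := by
    refine ⟨h2C, hno, fun c hc => ?_⟩
    have := congrArg star (hno _ (star_mem hc))
    rwa [star_mul, star_mul, star_star, h1.2, h2.2, star_zero, ← mul_assoc] at this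
  have hzc : ∀ c ∈ C, z * c = c * z := by
    intro c hc
    have e1 : c * z ∈ annIdeal C f1 h1.2 :=
      ⟨mul_mem hc hzI.1, fun d hd => by
        rw [← mul_assoc, mul_assoc f1]; exact hzI.2.1 _ (mul_mem hd hc),
        fun d hd => by rw [mul_assoc, mul_assoc, ← mul_assoc z, hzI.2.2 d hd, mul_zero]⟩
    have e2 : z * c ∈ annIdeal C f1 h1.2 :=
      ⟨mul_mem hzI.1 hc, fun d hd => by rw [← mul_assoc, hzI.2.1 d hd, zero_mul],
        fun d hd => by rw [mul_assoc z]; exact hzI.2.2 _ (mul_mem hc hd)⟩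
    have e3 := (hz2 _ e1).1
    have e4 := (hz2 _ e2).2
    rw [← e4, mul_assoc, e3]
  have hzp := hzc p hpC
  have hq : IsPr (z * p) := ⟨by
    rw [mul_assoc, ← mul_assoc p, ← hzp, mul_assoc z p p, hp.1, ← mul_assoc, hz.1],
    by rw [star_mul, hz.2, hp.2, hzp]⟩
  have hqc : ∀ a ∈ C, z * p * a = a * (z * p) := by
    intro a ha
    rw [mul_assoc, hcen a ha, ← mul_assoc, hzc a ha, mul_assoc]
  have hq0 : z * p ≠ 0 := by
    intro h0
    have e1 : f2 = z * p * f2 := by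
      rw [mul_assoc, hcen _ h2C, h2p, (hz2 _ hf2).1]
    rw [h0, zero_mul] at e1
    exact h2n e1
  have hqp := hmin _ (mul_mem hzI.1 hpC) hq hqc (by rw [mul_assoc, hp.1]) hq0
  have e5 : f1 * z = 0 := by
    have := hzI.2.1 f1 h1C
    rwa [h1.1] at this
  apply h1n
  rw [← h1p, ← hqp, ← mul_assoc, e5, zero_mul]

/-- matrix units consisting of minimal projections under `p` -/
structure Good {Λ : Type*} (C : NonUnitalStarSubalgebra ℂ A) (p : A) (F : Λ → Λ → A) : Prop where
  mu : IsMU (fun _ => ()) F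
  mem : ∀ l l', F l l' ∈ C
  min : ∀ l, IsMinPr C (F l l)
  le : ∀ l, F l l * p = F l l

lemma Good.sc {Λ : Type*} {C : NonUnitalStarSubalgebra ℂ A} {p : A} {F : Λ → Λ → A}
    (h : Good C p F) (l l' : Λ) (c : A) (hc : c ∈ C) : ∃ z : ℂ, F l l * c * F l' l' = z • F l l' := by
  obtain ⟨z, hz⟩ := (h.min l).2.2.2 (c * F l' l) (mul_mem hc (h.mem _ _))
  refine ⟨z, ?_⟩
  rw [← h.mu.mul l' l l' rfl, ← h.mu.left l l', ← smul_mul_assoc, ← hz]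
  simp only [mul_assoc]

lemma Good.comp {Λ K : Type*} {C : NonUnitalStarSubalgebra ℂ A} {p : A} {F : Λ → Λ → A}
    (h : Good C p F) (f : K → Λ) (hf : Function.Injective f) :
    Good C p (fun x y => F (f x) (f y)) :=
  ⟨h.mu.comp f hf, fun _ _ => h.mem _ _, fun _ => h.min _, fun _ => h.le _⟩

lemma Good.tens {J Λ K : Type*} {C C' : NonUnitalStarSubalgebra ℂ A} {p p' : A}
    {E : J → J → A} {g : Λ → Λ → A} (hE : Good C p E) (hg : Good C' p' g) (hCC : C ≤ C')
    (hcen : ∀ a ∈ C', p' * a = a * p') (α0 : J) (h1 : ∀ l, E α0 α0 * g l l = g l l)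
    {a : K → J} {l : K → Λ} (hinj : ∀ x y, a x = a y → l x = l y → x = y) :
    Good C' p' (tens E g (fun _ => α0) a l) := by
  have hmu : IsMU (fun _ : K => ()) (FermionAF.tens E g (fun _ => α0) a l) :=
    tensor_mu hE.mu hg.mu h1 (fun _ _ _ => rfl) hinj (fun _ => rfl)
  have hmem : ∀ x y, FermionAF.tens E g (fun _ => α0) a l x y ∈ C' := fun x y =>
    mul_mem (mul_mem (hCC (hE.mem _ _)) (hg.mem _ _)) (hCC (hE.mem _ _))
  refine ⟨hmu, hmem, fun x => ⟨hmem _ _, hmu.pr x, hmu.ne x, fun c hc => ?_⟩, fun x => ?_⟩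
  · exact tens_scalar hE.mu hg.mu h1 (fun _ => rfl) C' (fun _ _ => hCC (hE.mem _ _)) hg.sc x x c hc
  · rw [FermionAF.tens, mul_assoc, ← hcen _ (hCC (hE.mem _ _)), ← mul_assoc, mul_assoc (E _ _),
      hg.le]

variable {C : ℕ → NonUnitalStarSubalgebra ℂ A} {p : ℕ → A}

lemma Ferm.two (h : Ferm C p) (k : ℕ) (e : A) (he : IsMinPr (C k) e) (hep : e * p k = e) :
    ∃ F : Fin 2 → Fin 2 → A, Good (C (k + 1)) (p (k + 1)) F ∧ ∀ i, e * F i i = F i i := by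
  have := h.fd (k + 1)
  obtain ⟨q, qC, qpr, q0, q1, q2, qne⟩ := h.step k e he hep
  have heC : e ∈ C (k + 1) := h.mono (Nat.le_succ k) he.1
  have hpp := (h.pr (k + 1)).1
  set q' := p (k + 1) * e with hq'
  have hcom : p (k + 1) * e = e * p (k + 1) := h.central (k + 1) e heC
  have hq'C : q' ∈ C (k + 1) := mul_mem (h.mem _) heC
  have hq'pr : IsPr q' := ⟨by
    rw [hq', mul_assoc, ← mul_assoc e, ← hcom, mul_assoc (p (k + 1)) e e, he.2.1.1, ← mul_assoc, hpp],
    by rw [hq', star_mul, (h.pr _).2, he.2.1.2, hcom]⟩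
  have hq'p : q' * p (k + 1) = q' := by rw [hq', hcom, mul_assoc, hpp]
  have heq' : e * q' = q' := by rw [hq', hcom, ← mul_assoc, he.2.1.1]
  have hd := hq'pr.sub qpr q2 q1
  have hd0 : q' - q ≠ 0 := fun hh => qne (sub_eq_zero.mp hh).symm
  have hdC : q' - q ∈ C (k + 1) := sub_mem hq'C qC
  obtain ⟨f1, f1m, f11, f12⟩ := exists_min (C (k + 1)) qC qpr q0
  obtain ⟨f2, f2m, f21, f22⟩ := exists_min (C (k + 1)) hdC hd hd0
  have hqd : q * (q' - q) = 0 := by rw [mul_sub, q1, qpr.1, sub_self]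
  have hdq : (q' - q) * q = 0 := by rw [sub_mul, q2, qpr.1, sub_self]
  have a1 : q' * f1 = f1 := by rw [← f11, ← mul_assoc, q2]
  have a2 : q' * f2 = f2 := by rw [← f21, ← mul_assoc, mul_sub, hq'pr.1, q2]
  have a1' : f1 * q' = f1 := by
    have := congrArg star a1; rwa [star_mul, hq'pr.2, f1m.2.1.2] at this
  have a2' : f2 * q' = f2 := by
    have := congrArg star a2; rwa [star_mul, hq'pr.2, f2m.2.1.2] at this
  have b1 : f1 * p (k + 1) = f1 := by rw [← a1', mul_assoc, hq'p]
  have b2 : f2 * p (k + 1) = f2 := by rw [← a2', mul_assoc, hq'p]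
  have c1 : e * f1 = f1 := by rw [← a1, ← mul_assoc, heq']
  have c2 : e * f2 = f2 := by rw [← a2, ← mul_assoc, heq']
  have o12 : f1 * f2 = 0 := by rw [← f12, ← f21, mul_assoc, ← mul_assoc q, hqd]; simp
  have o21 : f2 * f1 = 0 := by rw [← f22, ← f11, mul_assoc, ← mul_assoc (q' - q), hdq]; simp
  obtain ⟨c, hc, hc0⟩ := linked (C (k + 1)) (h.mem _) (h.pr _) (h.central _) (h.minc _) f1m.1 f2m.1
    f1m.2.1 f2m.2.1 f1m.2.2.1 f2m.2.2.1 b1 b2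
  have hfm : ∀ i, IsMinPr (C (k + 1)) (![f1, f2] i) := by
    intro i; fin_cases i
    · exact f1m
    · exact f2m
  have hfe : ∀ i, e * (![f1, f2] i) = ![f1, f2] i := by
    intro i; fin_cases i
    · exact c1
    · exact c2
  have hfp : ∀ i, (![f1, f2] i) * p (k + 1) = ![f1, f2] i := by
    intro i; fin_cases i
    · exact b1
    · exact b2
  obtain ⟨s', g, hg, g1, g2, g3⟩ := exists_mu (C (k + 1)) ![f1, f2] hfm (by
    intro i j hij
    fin_cases i <;> fin_cases j
    · exact absurd rfl hij
    · exact o12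
    · exact o21
    · exact absurd rfl hij)
  have hs01 : s' 0 = s' 1 := by
    by_contra hne
    obtain ⟨z, hz⟩ := g3 0 1 c hc
    rw [hg.zero _ _ hne, smul_zero] at hz
    exact hc0 hz
  have hs : ∀ i j, s' i = s' j := by
    intro i j
    fin_cases i <;> fin_cases j
    · rfl
    · exact hs01
    · exact hs01.symm
    · rfl
  refine ⟨g, ⟨⟨hg.ne, fun _ _ hh => absurd rfl hh, fun _ _ _ _ => hg.mul _ _ _ (hs _ _), hg.orth,
    hg.star⟩, g2, fun i => by rw [g1]; exact hfm i, fun i => by rw [g1]; exact hfp i⟩,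
    fun i => by rw [g1]; exact hfe i⟩

lemma Ferm.pow (h : Ferm C p) (k : ℕ) (e : A) (he : IsMinPr (C k) e) (hep : e * p k = e) (j : ℕ) :
    ∃ (Λ : Type) (_ : Fintype Λ) (F : Λ → Λ → A), Fintype.card Λ = 2 ^ j ∧
      Good (C (k + j)) (p (k + j)) F ∧ ∀ i, e * F i i = F i i := by
  induction j with
  | zero =>
    refine ⟨Unit, inferInstance, fun _ _ => e, rfl, ⟨⟨fun _ => he.2.2.1, fun _ _ hh => absurd rfl hh,
      fun _ _ _ _ => he.2.1.1, fun _ _ _ _ hh => absurd rfl hh, fun _ _ => he.2.1.2⟩,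
      fun _ _ => he.1, fun _ => he, fun _ => hep⟩, fun _ => he.2.1.1⟩
  | succ j ih =>
    obtain ⟨Λ, _, F, hcard, hF, hFe⟩ := ih
    have : Nonempty Λ := Fintype.card_pos_iff.mp (by rw [hcard]; positivity)
    obtain ⟨l0⟩ := this
    obtain ⟨G, hG, hGe⟩ := h.two (k + j) (F l0 l0) (hF.min _) (hF.le _)
    refine ⟨Λ × Fin 2, inferInstance, _, by simp [hcard, pow_succ],
      Good.tens (a := Prod.fst) (l := Prod.snd) hF hG (h.mono (Nat.le_succ _)) (h.central _) l0 hGe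
        (fun x y => Prod.ext), ?_⟩
    intro x
    rw [tens, ← hF.mu.left x.1 l0, ← mul_assoc, ← mul_assoc, ← mul_assoc, hFe]

lemma Ferm.any (h : Ferm C p) (k : ℕ) (e : A) (he : IsMinPr (C k) e) (hep : e * p k = e)
    (Λ : Type) [Fintype Λ] :
    ∃ (k' : ℕ) (F : Λ → Λ → A), k < k' ∧
      Good (C k') (p k') F ∧ ∀ i, e * F i i = F i i := by
  obtain ⟨M, _, F, hcard, hF, hFe⟩ := h.pow k e he hep (Fintype.card Λ + 1)
  have hle : Fintype.card Λ ≤ Fintype.card M := by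
    rw [hcard]
    exact (Nat.le_succ _).trans (Nat.lt_two_pow_self).le
  obtain ⟨f⟩ := Function.Embedding.nonempty_of_card_le hle
  exact ⟨_, _, by omega, hF.comp f f.injective, fun i => hFe _⟩

end Ferm

end FermionAF

namespace FermionAF

set_option linter.unusedVariables false

section Limit

variable {D B : Type*} [NonUnitalCStarAlgebra D] [NonUnitalCStarAlgebra B]

lemma agree (Dk : ℕ → NonUnitalStarSubalgebra ℂ D) (hmono : Monotone Dk) (f : ℕ → D →ₗ[ℂ] B)
    (hf : ∀ k, ∀ a ∈ Dk k, f (k + 1) a = f k a) (k m : ℕ) (hkm : k ≤ m) (a : D) (ha : a ∈ Dk k) :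
    f m a = f k a := by
  induction m, hkm using Nat.le_induction with
  | base => rfl
  | succ m hm ih => rw [hf m a (hmono hm ha), ih]

lemma exists_extension (Dk : ℕ → NonUnitalStarSubalgebra ℂ D) (hmono : Monotone Dk)
    (hdense : Dense (⋃ k, (Dk k : Set D))) (f : ℕ → D →ₗ[ℂ] B)
    (hf : ∀ k, ∀ a ∈ Dk k, f (k + 1) a = f k a) (hn : ∀ k, ∀ a ∈ Dk k, ‖f k a‖ ≤ ‖a‖) :
    ∃ F : D →L[ℂ] B, ∀ k, ∀ a ∈ Dk k, F a = f k a := by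
  have hag : ∀ k m, ∀ a ∈ Dk k, a ∈ Dk m → f k a = f m a := by
    intro k m a hk hm
    rcases le_total k m with h | h
    · exact (agree Dk hmono f hf k m h a hk).symm
    · exact agree Dk hmono f hf m k h a hm
  let U : Submodule ℂ D := ⨆ k, ((Dk k).toSubmodule : Submodule ℂ D)
  have hU : ∀ x, x ∈ U ↔ ∃ k, x ∈ Dk k := fun x =>
    Submodule.mem_iSup_of_directed _ (Monotone.directed_le (fun i j h => hmono h))
  choose κ hκ using fun x : U => (hU x).1 x.2
  have hval : ∀ (x : U) k, (x : D) ∈ Dk k → f (κ x) x = f k x := fun x k hk =>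
    hag _ _ _ (hκ x) hk
  let g : U →ₗ[ℂ] B :=
    { toFun := fun x => f (κ x) x
      map_add' := by
        intro x y
        let m := max (κ x) (κ y)
        have hx : (x : D) ∈ Dk m := hmono (le_max_left _ _) (hκ x)
        have hy : (y : D) ∈ Dk m := hmono (le_max_right _ _) (hκ y)
        rw [hval x m hx, hval y m hy, hval (x + y) m (add_mem hx hy), Submodule.coe_add, map_add]
      map_smul' := by
        intro c x
        rw [hval (c • x) (κ x) (SMulMemClass.smul_mem c (hκ x))]
        simp }
  let gc : U →L[ℂ] B := g.mkContinuous 1 (fun x => by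
    rw [one_mul]; exact hn _ _ (hκ x))
  have hd : DenseRange (U.subtypeL) := by
    refine hdense.mono ?_
    intro x hx
    obtain ⟨k, hk⟩ := Set.mem_iUnion.1 hx
    exact ⟨⟨x, (hU x).2 ⟨k, hk⟩⟩, rfl⟩
  have hi : IsUniformInducing (U.subtypeL) := isUniformInducing_val _
  refine ⟨gc.extend U.subtypeL, fun k a ha => ?_⟩
  have := ContinuousLinearMap.extend_eq gc hd hi ⟨a, (hU a).2 ⟨k, ha⟩⟩
  exact this.trans (hval ⟨a, (hU a).2 ⟨k, ha⟩⟩ k ha)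

/-- the recursively corrected embeddings -/
noncomputable def iseq (φ : ℕ → D →ₗ[ℂ] B) (R : ℕ → D →ₗ[ℂ] D) : ℕ → D →ₗ[ℂ] B
  | 0 => φ 0
  | k + 1 => (iseq φ R k).comp (R k) - (φ (k + 1)).comp (R k) + φ (k + 1)

lemma limit_maps (Dk : ℕ → NonUnitalStarSubalgebra ℂ D) (Bk : ℕ → NonUnitalStarSubalgebra ℂ B)
    (hDm : Monotone Dk) (hBm : Monotone Bk) (hDd : Dense (⋃ k, (Dk k : Set D)))
    (hBd : Dense (⋃ k, (Bk k : Set B)))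
    (u : D) (hu : ∀ k, u ∈ Dk k) (hu1 : ∀ k, ∀ a ∈ Dk k, u * a = a ∧ a * u = a)
    (φ : ℕ → D →ₗ[ℂ] B) (T : ℕ → B →ₗ[ℂ] D) (R : ℕ → D →ₗ[ℂ] D)
    (h1 : ∀ k, ∀ a ∈ Dk k, φ k a ∈ Bk k)
    (h2m : ∀ k, ∀ a ∈ Dk k, ∀ b ∈ Dk k, φ k (a * b) = φ k a * φ k b)
    (h2s : ∀ k, ∀ a ∈ Dk k, φ k (star a) = star (φ k a))
    (h2n : ∀ k, ∀ a ∈ Dk k, ‖φ k a‖ ≤ ‖a‖)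
    (h3 : ∀ k, ∀ a ∈ Dk k, ∀ b ∈ Dk (k + 1), φ k a * φ (k + 1) b = φ (k + 1) (a * b))
    (h4a : ∀ k, ∀ a ∈ Dk k, T k (φ k a) = a) (h4b : ∀ k, ∀ b ∈ Bk k, ‖T k b‖ ≤ ‖b‖)
    (h4c : ∀ k, ∀ b ∈ Bk k, T (k + 1) b = T k b)
    (h5a : ∀ k, ∀ a ∈ Dk (k + 1), R k a ∈ Dk k ∧ ‖R k a‖ ≤ ‖a‖)
    (h5b : ∀ k, ∀ a ∈ Dk k, R k a = a) :
    ∃ (i : D →L[ℂ] B) (r : B →L[ℂ] D), ∀ x, r (i x) = x := by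
  have hDs : ∀ k, Dk k ≤ Dk (k + 1) := fun k => hDm (Nat.le_succ k)
  have hBs : ∀ k, Bk k ≤ Bk (k + 1) := fun k => hBm (Nat.le_succ k)
  have h3r : ∀ k, ∀ a ∈ Dk k, ∀ b ∈ Dk (k + 1), φ (k + 1) b * φ k a = φ (k + 1) (b * a) := by
    intro k a ha b hb
    have := congrArg star (h3 k _ (star_mem ha) _ (star_mem hb))
    rw [star_mul, h2s k a ha, h2s _ b hb, star_star, star_star,
      ← h2s _ _ (mul_mem (hDs k (star_mem ha)) (star_mem hb)), star_mul, star_star, star_star] at this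
    exact this
  have step : ∀ k a, iseq φ R (k + 1) a = iseq φ R k (R k a) - φ (k + 1) (R k a) + φ (k + 1) a :=
    fun k a => rfl
  have main : ∀ k, ∀ a ∈ Dk k, iseq φ R k a ∈ Bk k ∧
      (∀ b ∈ Dk k, (iseq φ R k a - φ k a) * φ k b = 0 ∧ φ k b * (iseq φ R k a - φ k a) = 0) ∧
      ‖iseq φ R k a - φ k a‖ ≤ ‖a‖ ∧ T k (iseq φ R k a) = a := by
    intro k
    induction k with
    | zero =>
      intro a ha
      refine ⟨h1 0 a ha, fun b hb => ?_, ?_, h4a 0 a ha⟩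
      · simp [iseq]
      · simp [iseq]
    | succ k ih =>
      intro a ha
      obtain ⟨hx, hxn⟩ := h5a k a ha
      rw [step]
      generalize R k a = x at hx hxn
      obtain ⟨i1, i2, i3, i4⟩ := ih x hx
      have hx' := hDs k hx
      have hxs := star_mem hx
      have hxs' := star_mem hx'
      refine ⟨add_mem (sub_mem (hBs k i1) (h1 _ _ hx')) (h1 _ _ ha), ?_, ?_, ?_⟩
      all_goals try rw [add_sub_cancel_right]
      all_goals try rw [show iseq φ R k x - φ (k + 1) x = (iseq φ R k x - φ k x) +
        (φ k x - φ (k + 1) x) by abel]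
      · intro b hb
        rw [add_mul, mul_add]
        have e1 : (iseq φ R k x - φ k x) * φ (k + 1) b = 0 := by
          rw [← (hu1 _ b hb).1, ← h3 k u (hu k) b hb, ← mul_assoc, (i2 u (hu k)).1, zero_mul]
        have e2 : φ (k + 1) b * (iseq φ R k x - φ k x) = 0 := by
          rw [← (hu1 _ b hb).2, ← h3r k u (hu k) b hb, mul_assoc, (i2 u (hu k)).2, mul_zero]
        rw [e1, e2, sub_mul, mul_sub, h3 k x hx b hb, h3r k x hx b hb, h2m _ _ hx' _ hb,
          h2m _ _ hb _ hx']
        simp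
      · have k1 : ∀ b ∈ Dk (k + 1), (iseq φ R k x - φ k x) * φ (k + 1) b = 0 := by
          intro b hb
          rw [← (hu1 _ b hb).1, ← h3 k u (hu k) b hb, ← mul_assoc, (i2 u (hu k)).1, zero_mul]
        have k2 : ∀ b ∈ Dk (k + 1), φ (k + 1) b * (iseq φ R k x - φ k x) = 0 := by
          intro b hb
          rw [← (hu1 _ b hb).2, ← h3r k u (hu k) b hb, mul_assoc, (i2 u (hu k)).2, mul_zero]
        have hst : star (φ k x - φ (k + 1) x) = φ k (star x) - φ (k + 1) (star x) := by
          rw [star_sub, h2s _ _ hx, h2s _ _ hx']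
        have n1 : ‖φ k x - φ (k + 1) x‖ ≤ ‖a‖ := by
          have : ‖φ k x - φ (k + 1) x‖ ≤ ‖(φ k x - φ (k + 1) x) + φ (k + 1) x‖ := by
            apply norm_le_of_orth
            rw [hst, sub_mul, h3 k _ hxs _ hx', h2m _ _ hxs' _ hx', sub_self]
          rw [sub_add_cancel] at this
          exact this.trans ((h2n _ _ hx).trans hxn)
        refine orth_norm_add ?_ ?_ (i3.trans hxn) n1
        · have := congrArg star (show star (φ k x - φ (k + 1) x) * (iseq φ R k x - φ k x) = 0 by
            rw [hst, sub_mul, (i2 _ hxs).2, k2 _ hxs', sub_self])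
          rwa [star_mul, star_star, star_zero] at this
        · rw [hst, mul_sub, (i2 _ hxs).1, k1 _ hxs', sub_self]
      · rw [sub_add_sub_cancel, map_add, map_sub, h4c k _ i1, i4, h4a _ _ hx', h4a _ _ ha]
        simp
  have hin : ∀ k, ∀ a ∈ Dk k, ‖iseq φ R k a‖ ≤ ‖a‖ := by
    intro k a ha
    obtain ⟨i1, i2, i3, i4⟩ := main k a ha
    have := orth_norm_add (x := φ k a) (y := iseq φ R k a - φ k a)
      (by rw [← h2s _ _ ha]; exact (i2 _ (star_mem ha)).2)
      (by
        have := congrArg star (i2 _ (star_mem ha)).1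
        rwa [h2s _ _ ha, star_mul, star_star, star_zero] at this) (h2n _ _ ha) i3
    rwa [add_sub_cancel] at this
  obtain ⟨i, hi⟩ := exists_extension Dk hDm hDd (iseq φ R) (fun k a ha => by
    rw [step, h5b k a ha]; simp) hin
  obtain ⟨r, hr⟩ := exists_extension Bk hBm hBd T h4c h4b
  refine ⟨i, r, fun x => ?_⟩
  have hcl : IsClosed {x | r (i x) = x} := isClosed_eq (by fun_prop) continuous_id
  have hsub : (⋃ k, (Dk k : Set D)) ⊆ {x | r (i x) = x} := by
    intro x hx
    obtain ⟨k, hk⟩ := Set.mem_iUnion.1 hx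
    show r (i x) = x
    obtain ⟨i1, i2, i3, i4⟩ := main k x hk
    rw [hi k x hk, hr k _ i1, i4]
  exact hcl.closure_subset_iff.2 hsub (hDd x)

end Limit

end FermionAF

namespace FermionAF

set_option linter.unusedVariables false

section Stages

variable {D B : Type*} [NonUnitalCStarAlgebra D] [NonUnitalCStarAlgebra B]

/-- A stage of the construction. -/
structure Stage (Da : NonUnitalStarSubalgebra ℂ D) (u : D) (C : ℕ → NonUnitalStarSubalgebra ℂ B)
    (p : ℕ → B) where
  J : Type
  S : Type
  fin : Fintype J
  s : J → S
  e : J → J → D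
  E : J → J → B
  m : ℕ
  he : IsMU s e
  mem : ∀ α β, e α β ∈ Da
  span : ∀ c ∈ Da, c ∈ mspan e
  sum : ∑ α, e α α = u
  good : Good (C m) (p m) E

attribute [instance] Stage.fin

namespace Stage

variable {Da : NonUnitalStarSubalgebra ℂ D} {u : D} {C : ℕ → NonUnitalStarSubalgebra ℂ B}
    {p : ℕ → B} (Q : Stage Da u C p)

open Classical in
/-- block version of the target units -/
noncomputable def Es (α β : Q.J) : B := if Q.s α = Q.s β then Q.E α β else 0

lemma Es_mu : IsMU Q.s Q.Es := by
  classical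
  have := Q.good.mu.cut Q.s (fun _ _ _ => rfl)
  convert this using 3
  unfold Es
  congr

lemma Es_pos {α β : Q.J} (h : Q.s α = Q.s β) : Q.Es α β = Q.E α β := if_pos h

lemma Es_neg {α β : Q.J} (h : Q.s α ≠ Q.s β) : Q.Es α β = 0 := if_neg h

lemma Es_mem (α β : Q.J) : Q.Es α β ∈ C Q.m := by
  unfold Es
  split_ifs
  · exact Q.good.mem _ _
  · exact zero_mem _

lemma ex_phi : ∃ T : D →ₗ[ℂ] B, (∀ α β, T (Q.e α β) = Q.Es α β) := by
  obtain ⟨T, hT, -⟩ := compression Q.he Q.Es_mu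
  exact ⟨T, hT⟩

noncomputable def phi : D →ₗ[ℂ] B := Classical.choose Q.ex_phi

lemma phi_e (α β : Q.J) : Q.phi (Q.e α β) = Q.Es α β := Classical.choose_spec Q.ex_phi α β

lemma phi_mem (a : D) (ha : a ∈ Da) : Q.phi a ∈ C Q.m := by
  refine mspan_induct (P := fun a => Q.phi a ∈ C Q.m) (Q.span a ha)
    (fun α β => by rw [phi_e]; exact Q.Es_mem _ _) (by rw [map_zero]; exact zero_mem _)
    (fun x y hx hy => by rw [map_add]; exact add_mem hx hy)
    (fun c x hx => by rw [map_smul]; exact SMulMemClass.smul_mem _ hx)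

lemma phi_mul (a : D) (ha : a ∈ Da) (b : D) (hb : b ∈ Da) :
    Q.phi (a * b) = Q.phi a * Q.phi b :=
  (mspan_hom Q.he Q.Es_mu Q.phi Q.phi_e).1 a (Q.span a ha) b (Q.span b hb)

lemma phi_star (a : D) (ha : a ∈ Da) : Q.phi (star a) = star (Q.phi a) :=
  (mspan_hom Q.he Q.Es_mu Q.phi Q.phi_e).2 a (Q.span a ha)

lemma phi_norm [FiniteDimensional ℂ Da] (a : D) (ha : a ∈ Da) : ‖Q.phi a‖ ≤ ‖a‖ :=
  hom_contractive Da Q.phi Q.phi_mul Q.phi_star ha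

noncomputable def sumc (Q : Stage Da u C p) (c : Q.J → Q.J → ℂ) : D :=
  ∑ α, ∑ β, c α β • Q.e α β

lemma ex_T : ∃ T : B →ₗ[ℂ] D, (∀ α β, T (Q.Es α β) = Q.e α β) ∧
    ∀ (b : B) (c : Q.J → Q.J → ℂ),
      (∀ α β, Q.s α = Q.s β → Q.E α α * b * Q.E β β = c α β • Q.E α β) →
        T b = Q.sumc c ∧ ‖T b‖ ≤ ‖b‖ := by
  obtain ⟨T, hT, hT2⟩ := compression Q.Es_mu Q.he
  refine ⟨T, hT, fun b c h => hT2 b c fun α β hs => ?_⟩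
  rw [Q.Es_pos rfl, Q.Es_pos rfl, Q.Es_pos hs]
  exact h _ _ hs

noncomputable def T : B →ₗ[ℂ] D := Classical.choose Q.ex_T

lemma T_Es (α β : Q.J) : Q.T (Q.Es α β) = Q.e α β := (Classical.choose_spec Q.ex_T).1 α β

lemma T_spec (b : B) (c : Q.J → Q.J → ℂ)
    (h : ∀ α β, Q.s α = Q.s β → Q.E α α * b * Q.E β β = c α β • Q.E α β) :
    Q.T b = Q.sumc c ∧ ‖Q.T b‖ ≤ ‖b‖ := (Classical.choose_spec Q.ex_T).2 b c h

lemma T_norm (b : B) (hb : b ∈ C Q.m) : ‖Q.T b‖ ≤ ‖b‖ := by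
  choose c hc using fun α β => Q.good.sc α β b hb
  exact (Q.T_spec b c (fun α β _ => hc α β)).2

lemma T_phi (a : D) (ha : a ∈ Da) : Q.T (Q.phi a) = a := by
  refine mspan_induct (P := fun a => Q.T (Q.phi a) = a) (Q.span a ha)
    (fun α β => by rw [phi_e, T_Es]) (by simp)
    (fun x y hx hy => by rw [map_add, map_add, hx, hy])
    (fun c x hx => by rw [map_smul, map_smul, hx])

/-- compatibility of consecutive stages -/
structure Rel {Da' : NonUnitalStarSubalgebra ℂ D} (Q : Stage Da u C p) (Q' : Stage Da' u C p) :
    Prop where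
  lt : Q.m < Q'.m
  h3 : ∀ a ∈ Da, ∀ b ∈ Da', Q.phi a * Q'.phi b = Q'.phi (a * b)
  h4 : ∀ b ∈ C Q.m, Q'.T b = Q.T b
  h5 : ∃ R : D →ₗ[ℂ] D, (∀ a ∈ Da', R a ∈ Da ∧ ‖R a‖ ≤ ‖a‖) ∧ ∀ a ∈ Da, R a = a

lemma exists_next (hC : Ferm C p) (hu : u ≠ 0) (Da' : NonUnitalStarSubalgebra ℂ D)
    [FiniteDimensional ℂ Da'] (hle : Da ≤ Da') (hu1 : ∀ a ∈ Da', u * a = a ∧ a * u = a) :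
    ∃ Q' : Stage Da' u C p, Q.Rel Q' := by
  classical
  have heC : ∀ α β, Q.e α β ∈ Da' := fun α β => hle (Q.mem α β)
  obtain ⟨Λ, _, t, s', g, hr⟩ := exists_ref Da' Q.he heC
  have hne : Nonempty Q.J := by
    by_contra hemp
    rw [not_nonempty_iff] at hemp
    have := Q.sum
    simp at this
    exact hu this.symm
  obtain ⟨α0⟩ := hne
  obtain ⟨m', F, hm, hF, hFe⟩ := hC.any Q.m (Q.E α0 α0) (Q.good.min _) (Q.good.le _) Λ
  have hg' := Good.tens (K := KK Q.s t) (a := KK.a) (l := KK.l) Q.good hF (hC.mono hm.le)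
    (hC.central m') α0 hFe KK.inj
  let Q' : Stage Da' u C p :=
    { J := KK Q.s t
      S := Λ
      fin := inferInstance
      s := fun x => s' x.l
      e := ref Q.s Q.e t g
      E := tens Q.E F (fun _ => α0) KK.a KK.l
      m := m'
      he := hr.ref_mu Q.he
      mem := hr.ref_mem heC
      span := hr.ref_span Q.he heC (by rw [Q.sum]; exact hu1)
      sum := by
        have := hr.ref_sum Q.he
        rw [Q.sum] at this
        exact this
      good := hg' }
  have he' : IsMU Q'.s Q'.e := Q'.he
  refine ⟨Q', ⟨hm, ?_, ?_, ?_⟩⟩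
  · intro a ha b hb
    refine mspan_induct (P := fun a => Q.phi a * Q'.phi b = Q'.phi (a * b)) (Q.span a ha)
      (fun α β => ?_) (by simp) (fun x y hx hy => by rw [map_add, add_mul, hx, hy, add_mul, map_add])
      (fun c x hx => by rw [map_smul, smul_mul_assoc, hx, smul_mul_assoc, map_smul])
    refine mspan_induct (P := fun b => Q.phi (Q.e α β) * Q'.phi b = Q'.phi (Q.e α β * b))
      (Q'.span b hb)
      (fun x y => ?_) (by simp) (fun x y hx hy => by rw [map_add, mul_add, hx, hy, mul_add, map_add])
      (fun c x hx => by rw [map_smul, mul_smul_comm, hx, mul_smul_comm, map_smul])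
    rw [Q.phi_e, Q'.phi_e]
    by_cases hs : Q.s α = Q.s β
    · rw [Q.Es_pos hs]
      by_cases hb : β = KK.a x
      · subst hb
        let x' : KK Q.s t := KK.mk α (KK.l x) (hs.trans (KK.hs x))
        have e1 : Q.e α (KK.a x) * Q'.e x y = Q'.e x' y := tens_left Q.he g t KK.a KK.l α x y x' rfl rfl hs
        have e2 : Q.E α (KK.a x) * Q'.E x y = Q'.E x' y :=
          tens_left Q.good.mu F (fun _ => α0) KK.a KK.l α x y x' rfl rfl rfl
        rw [e1, Q'.phi_e]
        by_cases h1 : Q'.s x = Q'.s y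
        · rw [Q'.Es_pos h1, e2, Q'.Es_pos (α := x') h1]
        · rw [Q'.Es_neg h1, Q'.Es_neg (α := x') h1, mul_zero]
      · have e1 : Q.e α β * Q'.e x y = 0 := tens_left_zero Q.he g t KK.a KK.l α β x y hb
        have e2 : Q.E α β * Q'.E x y = 0 := tens_left_zero Q.good.mu F (fun _ => α0) KK.a KK.l α β x y hb
        rw [e1, map_zero]
        by_cases h1 : Q'.s x = Q'.s y
        · rw [Q'.Es_pos h1, e2]
        · rw [Q'.Es_neg h1, mul_zero]
    · rw [Q.Es_neg hs, Q.he.zero _ _ hs]; simp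
  · intro b hb
    choose c hc using fun α β => Q.good.sc α β b hb
    rw [(Q.T_spec b c (fun α β _ => hc α β)).1]
    let c' : KK Q.s t → KK Q.s t → ℂ := fun x y => if x.l = y.l then c x.a y.a else 0
    have hE := Q.good.mu
    have hc' : ∀ x y : KK Q.s t, Q'.E x x * b * Q'.E y y = c' x y • Q'.E x y := by
      intro x y
      have e0 : Q.E α0 x.a * b * Q.E y.a α0 = c x.a y.a • Q.E α0 α0 := by
        calc Q.E α0 x.a * b * Q.E y.a α0
            = (Q.E α0 x.a * Q.E x.a x.a) * b * (Q.E y.a y.a * Q.E y.a α0) := by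
              rw [hE.left, hE.right]
          _ = Q.E α0 x.a * (Q.E x.a x.a * b * Q.E y.a y.a) * Q.E y.a α0 := by
              simp only [mul_assoc]
          _ = _ := by
              rw [hc, mul_smul_comm, smul_mul_assoc, hE.mul _ _ _ rfl, hE.mul _ _ _ rfl]
      have e1 : Q'.E x x * b * Q'.E y y = Q.E x.a α0 * (F x.l x.l *
          (Q.E α0 x.a * b * Q.E y.a α0) * F y.l y.l) * Q.E α0 y.a := by
        show tens Q.E F (fun _ => α0) KK.a KK.l x x * b * tens Q.E F (fun _ => α0) KK.a KK.l y y = _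
        simp only [tens, mul_assoc]
      have e2 : Q.E α0 α0 * F y.l y.l = F y.l y.l := hFe _
      rw [e1, e0, mul_smul_comm, smul_mul_assoc, mul_assoc (F _ _), e2]
      show _ = c' x y • tens Q.E F (fun _ => α0) KK.a KK.l x y
      by_cases hl : x.l = y.l
      · simp only [c', if_pos hl, tens]
        rw [← hl, hF.mu.left, mul_smul_comm, smul_mul_assoc]
      · simp only [c', if_neg hl]
        rw [hF.mu.orth _ _ _ _ hl]; simp
    rw [(Q'.T_spec b c' (fun x y _ => hc' x y)).1]
    show ∑ x : KK Q.s t, ∑ y : KK Q.s t, c' x y • ref Q.s Q.e t g x y = ∑ α, ∑ β, c α β • Q.e α β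
    have key : ∀ α β, c α β • Q.e α β = ∑ x : KK Q.s t, ∑ y : KK Q.s t,
        if x.a = α ∧ y.a = β ∧ x.l = y.l then c α β • ref Q.s Q.e t g x y else 0 := by
      intro α β
      conv_lhs => rw [hr.key Q.he α β]
      simp only [Finset.smul_sum, smul_ite, smul_zero]
    simp only [key]
    have sw : ∀ f : Q.J → Q.J → KK Q.s t → KK Q.s t → D,
        ∑ α, ∑ β, ∑ x, ∑ y, f α β x y = ∑ x, ∑ y, ∑ α, ∑ β, f α β x y := by
      intro f
      calc _ = ∑ α, ∑ x, ∑ β, ∑ y, f α β x y :=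
            Finset.sum_congr rfl fun α _ => Finset.sum_comm
        _ = ∑ x, ∑ α, ∑ β, ∑ y, f α β x y := Finset.sum_comm
        _ = ∑ x, ∑ α, ∑ y, ∑ β, f α β x y :=
            Finset.sum_congr rfl fun x _ => Finset.sum_congr rfl fun α _ => Finset.sum_comm
        _ = _ := Finset.sum_congr rfl fun x _ => Finset.sum_comm
    rw [sw]
    refine Finset.sum_congr rfl fun x _ => Finset.sum_congr rfl fun y _ => ?_
    rw [Finset.sum_eq_single x.a, Finset.sum_eq_single y.a]
    · by_cases hl : x.l = y.l
      · simp [c', hl]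
      · simp [c', hl]
    · intro β _ hb; exact if_neg fun hh => hb hh.2.1.symm
    · simp
    · intro α _ ha; exact Finset.sum_eq_zero fun β _ => if_neg fun hh => ha hh.1.symm
    · simp
  · have hex : ∀ q : Q.S, ∃ l : Λ, ∀ α, Q.s α = q → q = Q.s (t l) := by
      intro q
      by_cases hq : ∃ α, Q.s α = q
      · obtain ⟨α, rfl⟩ := hq
        obtain ⟨l, hl⟩ := hr.ex α
        exact ⟨l, fun _ _ => hl⟩
      · obtain ⟨l, -⟩ := hr.ex α0
        exact ⟨l, fun α hα => absurd ⟨α, hα⟩ hq⟩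
    choose L hL using hex
    let σ : Q.J → KK Q.s t := fun α => KK.mk α (L (Q.s α)) (hL (Q.s α) α rfl)
    have hσ : Function.Injective σ := fun α β h => congrArg KK.a h
    have hG := ((hr.ref_mu Q.he).comp σ hσ).cut Q.s (fun α β hs => by
      show s' (L (Q.s α)) = s' (L (Q.s β))
      rw [hs])
    obtain ⟨R, -, hR⟩ := compression hG Q.he
    have hR' : ∀ (b : D) (c : Q.J → Q.J → ℂ), (∀ α β, Q.s α = Q.s β →
        ref Q.s Q.e t g (σ α) (σ α) * b * ref Q.s Q.e t g (σ β) (σ β) =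
          c α β • ref Q.s Q.e t g (σ α) (σ β)) →
        R b = ∑ α, ∑ β, c α β • Q.e α β ∧ ‖R b‖ ≤ ‖b‖ := by
      intro b c h
      refine hR b c fun α β hs => ?_
      rw [if_pos rfl, if_pos rfl, if_pos hs]
      exact h α β hs
    refine ⟨R, fun a ha => ?_, fun a ha => ?_⟩
    · choose c hc using fun α β => hr.ref_sc Q.he heC (σ α) (σ β) a ha
      obtain ⟨r1, r2⟩ := hR' a c (fun α β _ => hc α β)
      refine ⟨?_, r2⟩
      rw [r1]
      exact sum_mem fun α _ => sum_mem fun β _ => SMulMemClass.smul_mem _ (Q.mem _ _)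
    · refine mspan_induct (P := fun a => R a = a) (Q.span a ha) (fun γ δ => ?_) (by simp)
        (fun x y hx hy => by rw [map_add, hx, hy]) (fun c x hx => by rw [map_smul, hx])
      by_cases hs : Q.s γ = Q.s δ
      · rw [(hR' (Q.e γ δ) (fun α β => if α = γ ∧ β = δ then 1 else 0) ?_).1]
        · rw [Finset.sum_eq_single γ, Finset.sum_eq_single δ]
          · simp
          · intro β _ hb; simp [hb]
          · simp
          · intro α _ ha; simp [ha]
          · simp
        · intro α β hab
          rw [mul_assoc]
          by_cases hb : β = δ
          · subst hb
            have e1 : Q.e γ β * ref Q.s Q.e t g (σ β) (σ β) = ref Q.s Q.e t g (σ γ) (σ β) :=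
              tens_left Q.he g t KK.a KK.l γ (σ β) (σ β) (σ γ) rfl (congrArg L hs) hs
            rw [e1]
            by_cases ha : α = γ
            · subst ha
              simp [(hr.ref_mu Q.he).left]
            · simp [ha, (hr.ref_mu Q.he).orth _ _ _ _ (fun hh => ha (hσ hh))]
          · have e1 : Q.e γ δ * ref Q.s Q.e t g (σ β) (σ β) = 0 :=
              tens_left_zero Q.he g t KK.a KK.l γ δ (σ β) (σ β) (Ne.symm hb)
            simp [e1, hb]
      · rw [Q.he.zero _ _ hs, map_zero]

end Stage

lemma exists_dep_seq {X : ℕ → Type*} (r : ∀ k, X k → X (k + 1) → Prop) (x0 : X 0)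
    (h : ∀ k (x : X k), ∃ y, r k x y) : ∃ f : ∀ k, X k, ∀ k, r k (f k) (f (k + 1)) := by
  choose g hg using h
  exact ⟨fun k => Nat.rec x0 (fun k x => g k x) k, fun k => hg k _⟩

/-- Theorem K, with a given initial stage -/
theorem complemented_aux (Dk : ℕ → NonUnitalStarSubalgebra ℂ D) (hDm : Monotone Dk)
    (hfd : ∀ k, FiniteDimensional ℂ (Dk k)) (hDd : Dense (⋃ k, (Dk k : Set D)))
    (u : D) (hu0 : u ≠ 0) (hu : ∀ k, u ∈ Dk k)
    (hu1 : ∀ k, ∀ a ∈ Dk k, u * a = a ∧ a * u = a)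
    {C : ℕ → NonUnitalStarSubalgebra ℂ B} {p : ℕ → B} (hC : Ferm C p) (Q0 : Stage (Dk 0) u C p) :
    ∃ (i : D →L[ℂ] B) (r : B →L[ℂ] D), ∀ x, r (i x) = x := by
  obtain ⟨Q, hQ⟩ := exists_dep_seq (X := fun k => Stage (Dk k) u C p) (fun k x y => x.Rel y) Q0
    (fun k x => by
      have := hfd (k + 1)
      exact x.exists_next hC hu0 (Dk (k + 1)) (hDm (Nat.le_succ k)) (hu1 (k + 1)))
  have hm : StrictMono (fun k => (Q k).m) := strictMono_nat_of_lt_succ fun k => (hQ k).lt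
  choose R hR1 hR2 using fun k => (hQ k).h5
  refine limit_maps Dk (fun k => C (Q k).m) hDm (fun i j h => hC.mono (hm.monotone h)) hDd ?_ u hu
    hu1 (fun k => (Q k).phi) (fun k => (Q k).T) R (fun k => (Q k).phi_mem) (fun k => (Q k).phi_mul)
    (fun k => (Q k).phi_star) (fun k => ?_) (fun k => (hQ k).h3) (fun k => (Q k).T_phi)
    (fun k => (Q k).T_norm) (fun k => (hQ k).h4) hR1 hR2
  · refine hC.dense.mono ?_
    intro x hx
    obtain ⟨k, hk⟩ := Set.mem_iUnion.1 hx
    exact Set.mem_iUnion.2 ⟨k, hC.mono (hm.le_apply (x := k)) hk⟩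
  · have := hfd k
    exact (Q k).phi_norm

/-- prepend a term -/
def shiftSeq (X0 : NonUnitalStarSubalgebra ℂ D) (Dk : ℕ → NonUnitalStarSubalgebra ℂ D) :
    ℕ → NonUnitalStarSubalgebra ℂ D
  | 0 => X0
  | k + 1 => Dk k

theorem complemented_shift (Dk : ℕ → NonUnitalStarSubalgebra ℂ D) (hDm : Monotone Dk)
    (hfd : ∀ k, FiniteDimensional ℂ (Dk k)) (hDd : Dense (⋃ k, (Dk k : Set D)))
    (u : D) (hu0 : u ≠ 0) (hu : ∀ k, u ∈ Dk k)
    (hu1 : ∀ k, ∀ a ∈ Dk k, u * a = a ∧ a * u = a)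
    {C : ℕ → NonUnitalStarSubalgebra ℂ B} {p : ℕ → B} (hC : Ferm C p)
    (X0 : NonUnitalStarSubalgebra ℂ D) (h0 : X0 ≤ Dk 0) (hX : FiniteDimensional ℂ X0)
    (huX : u ∈ X0) (Q0 : Stage X0 u C p) :
    ∃ (i : D →L[ℂ] B) (r : B →L[ℂ] D), ∀ x, r (i x) = x := by
  refine complemented_aux (shiftSeq X0 Dk) ?_ ?_ ?_ u hu0 ?_ ?_ hC Q0
  · refine monotone_nat_of_le_succ fun k => ?_
    cases k with
    | zero => exact h0
    | succ k => exact hDm (Nat.le_succ k)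
  · intro k
    cases k with
    | zero => exact hX
    | succ k => exact hfd k
  · refine hDd.mono ?_
    intro x hx
    obtain ⟨k, hk⟩ := Set.mem_iUnion.1 hx
    exact Set.mem_iUnion.2 ⟨k + 1, hk⟩
  · intro k
    cases k with
    | zero => exact huX
    | succ k => exact hu k
  · intro k
    cases k with
    | zero => exact fun a ha => hu1 0 a (h0 ha)
    | succ k => exact hu1 k

/-- Theorem K -/
theorem complemented (Dk : ℕ → NonUnitalStarSubalgebra ℂ D) (hDm : Monotone Dk)
    (hfd : ∀ k, FiniteDimensional ℂ (Dk k)) (hDd : Dense (⋃ k, (Dk k : Set D)))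
    (u : D) (hu0 : u ≠ 0) (hus : star u = u) (hu : ∀ k, u ∈ Dk k)
    (hu1 : ∀ k, ∀ a ∈ Dk k, u * a = a ∧ a * u = a)
    {C : ℕ → NonUnitalStarSubalgebra ℂ B} {p : ℕ → B} (hC : Ferm C p) :
    ∃ (i : D →L[ℂ] B) (r : B →L[ℂ] D), ∀ x, r (i x) = x := by
  have huu : u * u = u := (hu1 0 u (hu 0)).1
  have hmu : IsMU (fun _ : Unit => ()) (fun _ _ => u) :=
    ⟨fun _ => hu0, fun _ _ hh => absurd rfl hh, fun _ _ _ _ => huu,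
      fun _ _ _ _ hh => absurd rfl hh, fun _ _ => hus⟩
  have h0 : muAlg hmu ≤ Dk 0 := by
    intro x hx
    have hx' : x ∈ mspan (fun _ _ : Unit => u) := hx
    exact mspan_induct (P := fun x => x ∈ Dk 0) hx' (fun _ _ => hu 0) (zero_mem (Dk 0))
      (fun y z hy hz => add_mem hy hz) (fun c y hy => SMulMemClass.smul_mem c hy)
  have huX : u ∈ muAlg hmu := by
    have h : u ∈ mspan (fun _ _ : Unit => u) := mem_mspan (fun _ _ : Unit => u) () ()
    exact h
  have hX : FiniteDimensional ℂ (muAlg hmu) := muAlg_fd hmu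
  have hsp : ∀ c ∈ muAlg hmu, c ∈ mspan (fun _ _ : Unit => u) := fun c hc => hc
  generalize muAlg hmu = X0 at h0 huX hX hsp
  have := hC.fd 0
  obtain ⟨f, hf, f1, f2⟩ := exists_min (C 0) (hC.mem 0) (hC.pr 0) (hC.ne 0)
  let Q0 : Stage X0 u C p :=
    { J := Unit
      S := Unit
      fin := inferInstance
      s := fun _ => ()
      e := fun _ _ => u
      E := fun _ _ => f
      m := 0
      he := hmu
      mem := fun _ _ => huX
      span := hsp
      sum := by simp
      good := ⟨⟨fun _ => hf.2.2.1, fun _ _ hh => absurd rfl hh, fun _ _ _ _ => hf.2.1.1,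
        fun _ _ _ _ hh => absurd rfl hh, fun _ _ => hf.2.1.2⟩, fun _ _ => hf.1, fun _ => hf,
        fun _ => f2⟩ }
  exact complemented_shift Dk hDm hfd hDd u hu0 hu hu1 hC X0 h0 hX huX Q0

end Stages

end FermionAF

namespace FermionAF

set_option linter.unusedVariables false

open Topology ZeroAtInfty Filter

section Unitize

variable {Z B : Type*} [NonUnitalCStarAlgebra Z] [NonUnitalCStarAlgebra B]

/-- The unitization of a subalgebra. -/
noncomputable def uAlg (S : NonUnitalStarSubalgebra ℂ Z) :
    NonUnitalStarSubalgebra ℂ (Unitization ℂ Z) where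
  carrier := {x | x.snd ∈ S}
  add_mem' := by
    intro x y hx hy
    simp only [Set.mem_ofPred_eq, Unitization.snd_add] at *
    exact add_mem hx hy
  zero_mem' := by simp
  smul_mem' := by
    intro c x hx
    simp only [Set.mem_ofPred_eq, Unitization.snd_smul] at *
    exact SMulMemClass.smul_mem c hx
  mul_mem' := by
    intro x y hx hy
    simp only [Set.mem_ofPred_eq, Unitization.snd_mul] at *
    exact add_mem (add_mem (SMulMemClass.smul_mem _ hy) (SMulMemClass.smul_mem _ hx)) (mul_mem hx hy)
  star_mem' := by
    intro x hx
    simp only [Set.mem_ofPred_eq, Unitization.snd_star] at *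
    exact star_mem hx

lemma mem_uAlg {S : NonUnitalStarSubalgebra ℂ Z} {x : Unitization ℂ Z} :
    x ∈ uAlg S ↔ x.snd ∈ S := Iff.rfl

lemma uAlg_fd (S : NonUnitalStarSubalgebra ℂ Z) [FiniteDimensional ℂ S] :
    FiniteDimensional ℂ (uAlg S) := by
  let L : uAlg S →ₗ[ℂ] ℂ × S :=
    { toFun := fun x => (x.1.fst, ⟨x.1.snd, x.2⟩)
      map_add' := fun x y => rfl
      map_smul' := fun c x => rfl }
  refine FiniteDimensional.of_injective L ?_
  intro x y h
  have h1 : x.1.fst = y.1.fst := congrArg (fun q : ℂ × S => q.1) h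
  have h2 : x.1.snd = y.1.snd := congrArg (fun q : ℂ × S => (q.2 : Z)) h
  exact Subtype.ext (Unitization.ext h1 h2)

theorem comp_of_af (Zk : ℕ → NonUnitalStarSubalgebra ℂ Z) (hZm : Monotone Zk)
    (hfd : ∀ k, FiniteDimensional ℂ (Zk k)) (hZd : Dense (⋃ k, (Zk k : Set Z)))
    {C : ℕ → NonUnitalStarSubalgebra ℂ B} {p : ℕ → B} (hC : Ferm C p) :
    ∃ (i : Z →L[ℂ] B) (r : B →L[ℂ] Z), ∀ x, r (i x) = x := by
  have hden : Dense (⋃ k, (uAlg (Zk k) : Set (Unitization ℂ Z))) := by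
    intro x
    have hc : Continuous (fun z : Z => (Unitization.inl x.fst + (z : Unitization ℂ Z))) :=
      continuous_const.add Unitization.continuous_inr
    have := map_mem_closure (t := ⋃ k, (uAlg (Zk k) : Set (Unitization ℂ Z))) hc (hZd x.snd) ?_
    · rwa [Unitization.inl_fst_add_inr_snd_eq] at this
    · intro z hz
      obtain ⟨k, hk⟩ := Set.mem_iUnion.1 hz
      refine Set.mem_iUnion.2 ⟨k, ?_⟩
      show (Unitization.inl x.fst + (z : Unitization ℂ Z)).snd ∈ Zk k
      simpa using hk
  obtain ⟨i, r, hir⟩ := complemented (fun k => uAlg (Zk k)) (fun k l h x hx => hZm h hx)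
    (fun k => by have := hfd k; exact uAlg_fd (Zk k)) hden (1 : Unitization ℂ Z) one_ne_zero
    (star_one _) (fun k => by simp [mem_uAlg]) (fun k a _ => ⟨one_mul a, mul_one a⟩) hC
  let j : Z →L[ℂ] Unitization ℂ Z :=
    { toFun := fun z => (z : Unitization ℂ Z)
      map_add' := fun x y => Unitization.inr_add ℂ x y
      map_smul' := fun c x => Unitization.inr_smul ℂ c x
      cont := Unitization.continuous_inr }
  let q : Unitization ℂ Z →L[ℂ] Z :=
    { toFun := fun z => z.snd
      map_add' := fun x y => rfl
      map_smul' := fun c x => rfl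
      cont := Unitization.continuous_snd }
  refine ⟨i.comp j, q.comp r, fun x => ?_⟩
  show q (r (i (j x))) = x
  rw [hir]
  rfl

end Unitize

section Seq

variable {A : Type*} [NonUnitalCStarAlgebra A]

/-- build an element of `C₀(ℕ, A)` -/
def c0mk (f : ℕ → A) (h : Tendsto f atTop (𝓝 0)) : C₀(ℕ, A) where
  toFun := f
  continuous_toFun := continuous_of_discreteTopology
  zero_at_infty' := by
    rw [cocompact_eq_cofinite, Nat.cofinite_eq_atTop]
    exact h

lemma c0_tendsto (f : C₀(ℕ, A)) : Tendsto (fun n => f n) atTop (𝓝 0) := by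
  have := f.zero_at_infty'
  rw [cocompact_eq_cofinite, Nat.cofinite_eq_atTop] at this
  exact this

lemma c0_norm_apply (f : C₀(ℕ, A)) (n : ℕ) : ‖f n‖ ≤ ‖f‖ := f.toBCF.norm_coe_le_norm n

lemma c0_norm_le (f : C₀(ℕ, A)) {r : ℝ} (hr : 0 ≤ r) (h : ∀ n, ‖f n‖ ≤ r) : ‖f‖ ≤ r :=
  (f.toBCF.norm_le hr).2 h

/-- finitely supported sequences in a subalgebra -/
def seqAlg (S : NonUnitalStarSubalgebra ℂ A) (k : ℕ) : NonUnitalStarSubalgebra ℂ C₀(ℕ, A) where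
  carrier := {f | ∀ i, f i ∈ S ∧ (k < i → f i = 0)}
  add_mem' := by
    intro f g hf hg i
    refine ⟨add_mem (hf i).1 (hg i).1, fun h => ?_⟩
    rw [ZeroAtInftyContinuousMap.add_apply, (hf i).2 h, (hg i).2 h, add_zero]
  zero_mem' := fun i => ⟨zero_mem S, fun _ => rfl⟩
  smul_mem' := by
    intro c f hf i
    refine ⟨SMulMemClass.smul_mem c (hf i).1, fun h => ?_⟩
    rw [ZeroAtInftyContinuousMap.smul_apply, (hf i).2 h, smul_zero]
  mul_mem' := by
    intro f g hf hg i
    refine ⟨mul_mem (hf i).1 (hg i).1, fun h => ?_⟩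
    rw [ZeroAtInftyContinuousMap.mul_apply, (hf i).2 h, zero_mul]
  star_mem' := by
    intro f hf i
    refine ⟨star_mem (hf i).1, fun h => ?_⟩
    rw [ZeroAtInftyContinuousMap.star_apply, (hf i).2 h, star_zero]

lemma mem_seqAlg {S : NonUnitalStarSubalgebra ℂ A} {k : ℕ} {f : C₀(ℕ, A)} :
    f ∈ seqAlg S k ↔ ∀ i, f i ∈ S ∧ (k < i → f i = 0) := Iff.rfl

lemma seqAlg_fd (S : NonUnitalStarSubalgebra ℂ A) [FiniteDimensional ℂ S] (k : ℕ) :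
    FiniteDimensional ℂ (seqAlg S k) := by
  let L : seqAlg S k →ₗ[ℂ] (Fin (k + 1) → S) :=
    { toFun := fun f i => ⟨f.1 i, (f.2 i).1⟩
      map_add' := fun x y => rfl
      map_smul' := fun c x => rfl }
  refine FiniteDimensional.of_injective L ?_
  intro x y h
  refine Subtype.ext (ZeroAtInftyContinuousMap.ext fun i => ?_)
  by_cases hi : k < i
  · rw [(x.2 i).2 hi, (y.2 i).2 hi]
  · exact congrArg (fun q => ((q ⟨i, by omega⟩ : S) : A)) h

lemma seq_mono (S : ℕ → NonUnitalStarSubalgebra ℂ A) (hS : Monotone S) :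
    Monotone (fun k => seqAlg (S k) k) :=
  fun k l h f hf i => ⟨hS h (hf i).1, fun hi => (hf i).2 (lt_of_le_of_lt h hi)⟩

lemma seq_dense (S : ℕ → NonUnitalStarSubalgebra ℂ A) (hS : Monotone S)
    (hd : Dense (⋃ k, (S k : Set A))) :
    Dense (⋃ k, (seqAlg (S k) k : Set C₀(ℕ, A))) := by
  intro f
  rw [Metric.mem_closure_iff]
  intro ε hε
  obtain ⟨N, hN⟩ := (Metric.tendsto_atTop.1 (c0_tendsto f)) (ε / 2) (half_pos hε)
  have hg : ∀ i, ∃ (a : A) (k : ℕ), a ∈ S k ∧ ‖f i - a‖ < ε / 2 := by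
    intro i
    obtain ⟨a, ha, h⟩ := Metric.mem_closure_iff.1 (hd (f i)) (ε / 2) (half_pos hε)
    rw [dist_eq_norm] at h
    obtain ⟨k, hk⟩ := Set.mem_iUnion.1 ha
    exact ⟨a, k, hk, h⟩
  choose a k hk hak using hg
  let K := (Finset.range N).sup k + N
  let g : C₀(ℕ, A) := c0mk (fun i => if i < N then a i else 0) (by
    refine tendsto_const_nhds.congr' ?_
    filter_upwards [eventually_ge_atTop N] with i hi
    rw [if_neg (not_lt.2 hi)])
  have hgi : ∀ i, g i = if i < N then a i else 0 := fun i => rfl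
  refine ⟨g, Set.mem_iUnion.2 ⟨K, ?_⟩, ?_⟩
  · show g ∈ seqAlg (S K) K
    rw [mem_seqAlg]
    intro i
    rw [hgi]
    split_ifs with hi
    · refine ⟨hS ?_ (hk i), fun h => ?_⟩
      · have : k i ≤ (Finset.range N).sup k := Finset.le_sup (Finset.mem_range.2 hi)
        omega
      · omega
    · exact ⟨zero_mem _, fun _ => rfl⟩
  · rw [dist_eq_norm]
    refine lt_of_le_of_lt (c0_norm_le _ (half_pos hε).le fun i => ?_) (half_lt_self hε)
    rw [ZeroAtInftyContinuousMap.sub_apply, hgi]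
    split_ifs with hi
    · exact (hak i).le
    · have := hN i (not_lt.1 hi)
      rw [dist_zero_right] at this
      rw [sub_zero]
      exact this.le

/-- the shift isomorphism -/
lemma shift_iso : Nonempty (C₀(ℕ, A) ≃L[ℂ] A × C₀(ℕ, A)) := by
  let L : C₀(ℕ, A) ≃ₗ[ℂ] A × C₀(ℕ, A) :=
    { toFun := fun f => (f 0, c0mk (fun n => f (n + 1)) ((c0_tendsto f).comp (tendsto_add_atTop_nat 1)))
      map_add' := fun x y => rfl
      map_smul' := fun c x => rfl
      invFun := fun q => c0mk (fun n => Nat.casesOn n q.1 (fun m => q.2 m)) (by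
        rw [← tendsto_add_atTop_iff_nat 1]
        exact c0_tendsto q.2)
      left_inv := by
        intro f
        refine ZeroAtInftyContinuousMap.ext fun n => ?_
        cases n <;> rfl
      right_inv := by
        intro q
        refine Prod.ext rfl ?_
        exact ZeroAtInftyContinuousMap.ext fun n => rfl }
  have hL : Continuous L := by
    refine AddMonoidHomClass.continuous_of_bound L 1 fun f => ?_
    rw [one_mul, Prod.norm_def]
    exact max_le (c0_norm_apply f 0) (c0_norm_le _ (norm_nonneg _) fun n => c0_norm_apply f (n + 1))
  exact ⟨L.toContinuousLinearEquivOfContinuous hL⟩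

end Seq

lemma absorb {Z A B : Type*} [NormedAddCommGroup Z] [NormedSpace ℂ Z] [NormedAddCommGroup A]
    [NormedSpace ℂ A] [NormedAddCommGroup B] [NormedSpace ℂ B] (sh : Z ≃L[ℂ] A × Z)
    (i : Z →L[ℂ] B) (r : B →L[ℂ] Z) (h : ∀ x, r (i x) = x) : Nonempty (B ≃L[ℂ] A × B) := by
  have e := ContinuousLinearEquiv.equivOfRightInverse r i h
  exact ⟨((e.trans (sh.prodCongr (ContinuousLinearEquiv.refl ℂ _))).trans
    (ContinuousLinearEquiv.prodAssoc ℂ _ _ _)).trans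
    ((ContinuousLinearEquiv.refl ℂ A).prodCongr e.symm)⟩

theorem absorbs {A B : Type*} [NonUnitalCStarAlgebra A] [NonUnitalCStarAlgebra B]
    (S : ℕ → NonUnitalStarSubalgebra ℂ A) (hS : Monotone S)
    (hfd : ∀ k, FiniteDimensional ℂ (S k)) (hd : Dense (⋃ k, (S k : Set A)))
    {C : ℕ → NonUnitalStarSubalgebra ℂ B} {p : ℕ → B} (hC : Ferm C p) :
    Nonempty (B ≃L[ℂ] A × B) := by
  obtain ⟨i, r, h⟩ := comp_of_af (fun k => seqAlg (S k) k) (seq_mono S hS)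
    (fun k => by have := hfd k; exact seqAlg_fd (S k) k) (seq_dense S hS hd) hC
  obtain ⟨sh⟩ := shift_iso (A := A)
  exact absorb sh i r h

end FermionAF

namespace FermionAF

lemma ferm_of {B : Type*} [NonUnitalCStarAlgebra B] {S : ℕ → NonUnitalStarSubalgebra ℂ B}
    (h : IsAFPresentation B S) (hF : HasFermionProperty B S) :
    ∃ (C : ℕ → NonUnitalStarSubalgebra ℂ B) (p : ℕ → B), Ferm C p := by
  obtain ⟨hm, hfd, hd⟩ := h
  obtain ⟨n, p, hn, h1, h2, h3, h4, h5, h6⟩ := hF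
  refine ⟨fun k => S (n k), p, fun i j hij => hm (hn.monotone hij), fun k => hfd _, ?_, h1, h2, h3,
    h4, h5, fun k e he hep => (h6 k e he.1 he.2.1 he.2.2.1 hep he.2.2.2).2⟩
  refine hd.mono ?_
  intro x hx
  obtain ⟨k, hk⟩ := Set.mem_iUnion.1 hx
  exact Set.mem_iUnion.2 ⟨k, hm (hn.le_apply (x := k)) hk⟩

end FermionAF

theorem fermion_presentations_linearly_homeomorphic
    (A B : Type*) [NonUnitalCStarAlgebra A] [NonUnitalCStarAlgebra B]
    (hA : ∃ SA : ℕ → NonUnitalStarSubalgebra ℂ A,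
      IsAFPresentation A SA ∧ HasFermionProperty A SA)
    (hB : ∃ SB : ℕ → NonUnitalStarSubalgebra ℂ B,
      IsAFPresentation B SB ∧ HasFermionProperty B SB) :
    Nonempty (A ≃L[ℂ] B) := by
  obtain ⟨SA, hA1, hA2⟩ := hA
  obtain ⟨SB, hB1, hB2⟩ := hB
  obtain ⟨CA, pA, hCA⟩ := FermionAF.ferm_of hA1 hA2
  obtain ⟨CB, pB, hCB⟩ := FermionAF.ferm_of hB1 hB2
  obtain ⟨f⟩ := FermionAF.absorbs SA hA1.1 hA1.2.1 hA1.2.2 hCB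
  obtain ⟨g⟩ := FermionAF.absorbs SB hB1.1 hB1.2.1 hB1.2.2 hCA
  exact ⟨(g.trans (ContinuousLinearEquiv.prodComm ℂ B A)).trans f.symm⟩
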